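/- Let a₁, a₂ ≠ 0 be real numbers whose ratio satisfies a₂/a₁ < 0, a₂/a₁ = 1, or a₂/a₁ > 4, and let s > −3/4. Then there exist b ∈ (1/2, 1), ε > 0 and C > 0, depending only on s, b and b', such that for all σ ≥ 0, all b' ∈ [b, b+ε), and all Schwartz functions f, g on ℝ²: ‖∂_x(fg)‖_{X_{a₁}^{σ,s,b'−1}} ≤ C ‖f‖_{X_{a₂}^{σ,s,b}} ‖g‖_{X_{a₂}^{σ,s,b}}. -/

import Mathlib

open MeasureTheory Set Filter
open scoped ENNReal

/-- Space-time Fourier transform `f̂(τ,ξ) = ∫∫ e^{-i(tτ + xξ)} f(t,x) dt dx`. -/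
noncomputable def FT2 (f : ℝ → ℝ → ℂ) (τ ξ : ℝ) : ℂ :=
  ∫ t : ℝ, ∫ x : ℝ, Complex.exp (-Complex.I * (t * τ + x * ξ)) * f t x

/-- Gevrey–Bourgain norm `‖f‖_{X_a^{σ,s,b}}`, valued in `ℝ≥0∞`. -/
noncomputable def XNorm (a σ s b : ℝ) (f : ℝ → ℝ → ℂ) : ℝ≥0∞ :=
  (∫⁻ τ : ℝ, ∫⁻ ξ : ℝ, ENNReal.ofReal
      (Real.exp (2 * σ * |ξ|) * (1 + |ξ|) ^ (2 * s) *
        (1 + |τ - a * ξ ^ 3|) ^ (2 * b) * ‖FT2 f τ ξ‖ ^ 2)) ^ (1/2 : ℝ)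


/-!
On the Fourier side the estimate is an `L²` bound for a bilinear operator with an explicit kernel.
By Cauchy–Schwarz such a bound holds as soon as the square of the kernel is a sum of terms whose
integrals are bounded uniformly in the output frequency, or uniformly in one of the two input
frequencies.

The modulations of the output and of the two inputs differ by the resonance function
`a₂(x³ + y³) - a₁(x + y)³`, so the largest of the three dominates it. The condition on `a₂ / a₁`
makes the resonance function at least a multiple of `|(x + y)xy|`, and for `s > -3/4` this gain
reduces the frequency multiplier to the difference of the group velocities of the two remaining
waves. That difference is the Jacobian of the phase in the integral over those two waves, which is
therefore bounded. Where the two velocities nearly coincide, the multiplier is dominated instead by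
a bump of bounded mass around a critical line.
-/

section Fourier

open FourierTransform LineDeriv SchwartzMap

section General

variable {E F₁ F₂ F₃ : Type*} [NormedAddCommGroup E] [InnerProductSpace ℝ E]
  [FiniteDimensional ℝ E] [MeasurableSpace E] [BorelSpace E]
  [NormedAddCommGroup F₁] [NormedSpace ℂ F₁] [NormedAddCommGroup F₂] [NormedSpace ℂ F₂]
  [NormedAddCommGroup F₃] [NormedSpace ℂ F₃]

theorem fourier_apply_eq_fourierInv_neg (f : 𝓢(E, F₁)) (x : E) : 𝓕 f x = 𝓕⁻ f (-x) := by
  rw [fourierInv_coe, fourier_coe, Real.fourierInv_eq_fourier_neg, neg_neg]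

variable [CompleteSpace F₁] [CompleteSpace F₂] [CompleteSpace F₃]

theorem fourier_pairing (B : F₁ →L[ℂ] F₂ →L[ℂ] F₃) (f : 𝓢(E, F₁)) (g : 𝓢(E, F₂)) (x : E) :
    𝓕 (pairing B f g) x = ∫ y, B (𝓕 f y) (𝓕 g (x - y)) := by
  have fourierInv_pairing : 𝓕⁻ (pairing B f g) = convolution B (𝓕⁻ f) (𝓕⁻ g) := by
    simp [SchwartzMap.convolution]
  rw [fourier_apply_eq_fourierInv_neg, fourierInv_pairing, convolution_apply, convolution_def,
    ← integral_neg_eq_self]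
  simp only [fourier_apply_eq_fourierInv_neg, neg_sub, sub_neg_eq_add, neg_add_eq_sub]

end General

/-- The same Schwartz function on the plane with its Euclidean structure, where the library's
Fourier transform (with kernel `e^{-2πi⟨x,ξ⟩}`) lives. -/
noncomputable def onEuclideanPlane (f : 𝓢(ℝ × ℝ, ℂ)) : 𝓢(WithLp 2 (ℝ × ℝ), ℂ) :=
  compCLMOfContinuousLinearEquiv ℂ (WithLp.prodContinuousLinearEquiv 2 ℝ ℝ ℝ) f

/-- The space-time Fourier transform `FT2` of a Schwartz function, as a function of the pair
`z = (τ, ξ)`. -/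
noncomputable def spaceTimeFourier (f : 𝓢(ℝ × ℝ, ℂ)) (z : ℝ × ℝ) : ℂ :=
  FT2 (fun t x => f (t, x)) z.1 z.2

theorem spaceTimeFourier_eq_fourier (f : 𝓢(ℝ × ℝ, ℂ)) (z : ℝ × ℝ) :
    spaceTimeFourier f z = 𝓕 (onEuclideanPlane f) (WithLp.toLp 2 ((2 * Real.pi)⁻¹ • z)) := by
  have integrable_phase_mul :
      Integrable fun p : ℝ × ℝ => Complex.exp (-Complex.I * (p.1 * z.1 + p.2 * z.2)) * f p := by
    refine f.integrable.mono (by fun_prop) (.of_forall fun p => ?_)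
    simp [Complex.norm_exp]
  rw [spaceTimeFourier, FT2, fourier_coe, Real.fourier_eq',
    ← (WithLp.volume_preserving_toLp ℝ ℝ).integral_comp
      (MeasurableEquiv.toLp 2 (ℝ × ℝ)).measurableEmbedding,
    ← integral_prod _ integrable_phase_mul, ← Measure.volume_eq_prod]
  refine integral_congr_ae (.of_forall fun p => ?_)
  have : (Real.pi : ℂ) ≠ 0 := mod_cast Real.pi_ne_zero
  simp only [smul_eq_mul, WithLp.prod_inner_apply, onEuclideanPlane,
    compCLMOfContinuousLinearEquiv_apply, Function.comp_apply]
  congr 2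
  simp
  field_simp

theorem continuous_spaceTimeFourier (f : 𝓢(ℝ × ℝ, ℂ)) : Continuous (spaceTimeFourier f) := by
  simp only [funext (spaceTimeFourier_eq_fourier f)]
  exact (SchwartzMap.continuous _).comp
    ((WithLp.prod_continuous_toLp 2 ℝ ℝ).comp (continuous_const_smul _))

theorem norm_spaceTimeFourier_lineDerivOp (f : 𝓢(ℝ × ℝ, ℂ)) (z : ℝ × ℝ) :
    ‖spaceTimeFourier (∂_{((0, 1) : ℝ × ℝ)} f) z‖ = |z.2| * ‖spaceTimeFourier f z‖ := by
  have onEuclideanPlane_lineDerivOp : onEuclideanPlane (∂_{((0, 1) : ℝ × ℝ)} f) =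
      ∂_{WithLp.toLp 2 ((0, 1) : ℝ × ℝ)} (onEuclideanPlane f) :=
    (lineDerivOp_compCLMOfContinuousLinearEquiv ℂ _ _ _).symm
  rw [spaceTimeFourier_eq_fourier, spaceTimeFourier_eq_fourier, onEuclideanPlane_lineDerivOp,
    fourier_lineDerivOp_eq, smul_apply, smulLeftCLM_apply_apply (by fun_prop)]
  have := Real.pi_ne_zero
  simp [WithLp.prod_inner_apply, abs_of_pos Real.pi_pos]
  field_simp

theorem spaceTimeFourier_pairing_mul (f g : 𝓢(ℝ × ℝ, ℂ)) (z : ℝ × ℝ) :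
    spaceTimeFourier (pairing (ContinuousLinearMap.mul ℂ ℂ) f g) z =
      ((2 * Real.pi) ^ 2)⁻¹ • ∫ w, spaceTimeFourier f w * spaceTimeFourier g (z - w) := by
  have onEuclideanPlane_pairing : onEuclideanPlane (pairing (ContinuousLinearMap.mul ℂ ℂ) f g) =
      pairing (ContinuousLinearMap.mul ℂ ℂ) (onEuclideanPlane f) (onEuclideanPlane g) := rfl
  rw [eq_inv_smul_iff₀ (by positivity), spaceTimeFourier_eq_fourier, onEuclideanPlane_pairing,
    fourier_pairing, ← (WithLp.volume_preserving_toLp ℝ ℝ).integral_comp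
      (MeasurableEquiv.toLp 2 (ℝ × ℝ)).measurableEmbedding]
  have finrank_eq : Module.finrank ℝ (ℝ × ℝ) = 2 := by simp
  rw [← finrank_eq, ← Measure.integral_comp_inv_smul_of_nonneg _ _ (by positivity)]
  simp only [spaceTimeFourier_eq_fourier, smul_sub, WithLp.toLp_sub,
    ContinuousLinearMap.mul_apply']

theorem deriv_mul_eq_lineDerivOp_pairing (f g : 𝓢(ℝ × ℝ, ℂ)) (t x : ℝ) :
    deriv (fun y => f (t, y) * g (t, y)) x =
      ∂_{((0, 1) : ℝ × ℝ)} (pairing (ContinuousLinearMap.mul ℂ ℂ) f g) (t, x) := by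
  set h := pairing (ContinuousLinearMap.mul ℂ ℂ) f g
  have hasDerivAt_slice : HasDerivAt (fun y : ℝ => (t, y)) (0, 1) x :=
    (hasDerivAt_const x t).prodMk (hasDerivAt_id x)
  rw [lineDerivOp_apply_eq_fderiv]
  exact (h.differentiableAt.hasFDerivAt.comp_hasDerivAt x hasDerivAt_slice).deriv

theorem enorm_FT2_deriv_mul_le (f g : 𝓢(ℝ × ℝ, ℂ)) (z : ℝ × ℝ) :
    ‖FT2 (fun t x => deriv (fun y => f (t, y) * g (t, y)) x) z.1 z.2‖ₑ ≤
      ENNReal.ofReal |z.2| * ∫⁻ w, ‖spaceTimeFourier f w‖ₑ * ‖spaceTimeFourier g (z - w)‖ₑ := by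
  have two_pi_sq_inv_le_one : ‖((2 * Real.pi) ^ 2)⁻¹‖ₑ ≤ 1 := by
    rw [Real.enorm_of_nonneg (by positivity), ENNReal.ofReal_le_one]
    exact inv_le_one_of_one_le₀ (one_le_pow₀ (by linarith [Real.pi_gt_three]))
  simp only [deriv_mul_eq_lineDerivOp_pairing]
  change ‖spaceTimeFourier _ z‖ₑ ≤ _
  rw [← ofReal_norm, norm_spaceTimeFourier_lineDerivOp, ENNReal.ofReal_mul (abs_nonneg _),
    ofReal_norm, spaceTimeFourier_pairing_mul, enorm_smul]
  gcongr
  calc _ ≤ 1 * ∫⁻ w, ‖spaceTimeFourier f w * spaceTimeFourier g (z - w)‖ₑ :=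
        mul_le_mul' two_pi_sq_inv_le_one (enorm_integral_le_lintegral_enorm _)
    _ = _ := by simp only [one_mul, enorm_mul]

end Fourier

section Kernel

theorem eLpNorm_two_sq_eq_lintegral {α : Type*} [MeasurableSpace α] (f : α → ℝ≥0∞)
    (μ : Measure α) : eLpNorm f 2 μ ^ 2 = ∫⁻ x, f x ^ 2 ∂μ := by
  simpa using eLpNorm_nnreal_pow_eq_lintegral (p := 2) (f := f) (μ := μ) two_ne_zero

theorem rpow_half_sq (t : ℝ≥0∞) : (t ^ (1 / 2 : ℝ)) ^ 2 = t := by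
  rw [← ENNReal.rpow_two, ← ENNReal.rpow_mul, one_div_mul_cancel two_ne_zero, ENNReal.rpow_one]

theorem le_rpow_half_iff {t u : ℝ≥0∞} : t ≤ u ^ (1 / 2 : ℝ) ↔ t ^ 2 ≤ u := by
  rw [one_div, ENNReal.le_rpow_inv_iff two_pos, ENNReal.rpow_two]

theorem rpow_half_add_le (t u : ℝ≥0∞) :
    (t + u) ^ (1 / 2 : ℝ) ≤ t ^ (1 / 2 : ℝ) + u ^ (1 / 2 : ℝ) :=
  ENNReal.rpow_add_le_add_rpow t u (by norm_num) (by norm_num)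

theorem lintegral_mul_sq_le {α : Type*} [MeasurableSpace α] {μ : Measure α} {f g : α → ℝ≥0∞}
    (hf : AEMeasurable f μ) (hg : AEMeasurable g μ) :
    (∫⁻ x, f x * g x ∂μ) ^ 2 ≤ (∫⁻ x, f x ^ 2 ∂μ) * ∫⁻ x, g x ^ 2 ∂μ := by
  have := pow_le_pow_left' (ENNReal.lintegral_mul_le_Lp_mul_Lq μ .two_two hf hg) 2
  simpa only [Pi.mul_apply, mul_pow, rpow_half_sq, ENNReal.rpow_two] using this

variable {G : Type*} [MeasurableSpace G] [AddCommGroup G]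

/-- The bilinear operator with kernel `K`: convolution of `F` and `H`, weighted by `K z w` where
`w` and `z - w` are the arguments of `F` and `H`. -/
noncomputable def kernelConv (μ : Measure G) (K : G → G → ℝ≥0∞) (F H : G → ℝ≥0∞) (z : G) : ℝ≥0∞ :=
  ∫⁻ w, K z w * (F w * H (z - w)) ∂μ

theorem kernelConv_mono {μ : Measure G} {K L : G → G → ℝ≥0∞} (hKL : ∀ z w, K z w ≤ L z w)
    (F H : G → ℝ≥0∞) (z : G) : kernelConv μ K F H z ≤ kernelConv μ L F H z :=
  lintegral_mono fun w => mul_le_mul_left (hKL z w) _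

variable [MeasurableAdd₂ G] [MeasurableNeg G] {μ : Measure G} {K : G → G → ℝ≥0∞}
  {F H : G → ℝ≥0∞} {C : ℝ≥0∞}

theorem kernelConv_add {L : G → G → ℝ≥0∞} (hK : Measurable (Function.uncurry K))
    (hF : Measurable F) (hH : Measurable H) (z : G) :
    kernelConv μ (fun z w => K z w + L z w) F H z =
      kernelConv μ K F H z + kernelConv μ L F H z := by
  simp only [kernelConv, add_mul]
  exact lintegral_add_left (by fun_prop) _

theorem kernelConv_swap [μ.IsAddLeftInvariant] [μ.IsNegInvariant] (K : G → G → ℝ≥0∞)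
    (F H : G → ℝ≥0∞) (z : G) :
    kernelConv μ K F H z = kernelConv μ (fun z w => K z (z - w)) H F z := by
  unfold kernelConv
  rw [← lintegral_sub_left_eq_self _ z]
  simp only [sub_sub_cancel, mul_comm (F _)]

variable [SFinite μ]

theorem measurable_kernelConv (hK : Measurable (Function.uncurry K)) (hF : Measurable F)
    (hH : Measurable H) : Measurable (kernelConv μ K F H) :=
  Measurable.lintegral_prod_right (by fun_prop)

theorem eLpNorm_kernelConv_add_le {L : G → G → ℝ≥0∞} (hK : Measurable (Function.uncurry K))
    (hL : Measurable (Function.uncurry L)) (hF : Measurable F) (hH : Measurable H) :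
    eLpNorm (kernelConv μ (fun z w => K z w + L z w) F H) 2 μ ≤
      eLpNorm (kernelConv μ K F H) 2 μ + eLpNorm (kernelConv μ L F H) 2 μ := by
  rw [funext (kernelConv_add hK hF hH)]
  exact eLpNorm_add_le (measurable_kernelConv hK hF hH).aestronglyMeasurable
    (measurable_kernelConv hL hF hH).aestronglyMeasurable one_le_two

variable [μ.IsAddLeftInvariant]

theorem eLpNorm_kernelConv_le_of_output (hK : Measurable (Function.uncurry K)) (hF : Measurable F)
    (hH : Measurable H) (hC : ∀ z, ∫⁻ w, K z w ^ 2 ∂μ ≤ C ^ 2) :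
    eLpNorm (kernelConv μ K F H) 2 μ ≤ C * (eLpNorm F 2 μ * eLpNorm H 2 μ) := by
  rw [← ENNReal.pow_le_pow_left_iff two_ne_zero]
  simp only [mul_pow, eLpNorm_two_sq_eq_lintegral]
  calc ∫⁻ z, kernelConv μ K F H z ^ 2 ∂μ
      ≤ ∫⁻ z, C ^ 2 * ∫⁻ w, (F w * H (z - w)) ^ 2 ∂μ ∂μ := by
        gcongr with z
        exact (lintegral_mul_sq_le (by fun_prop) (by fun_prop)).trans (mul_le_mul_left (hC z) _)
    _ = C ^ 2 * ∫⁻ w, ∫⁻ z, (F w * H (z - w)) ^ 2 ∂μ ∂μ := by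
        rw [lintegral_const_mul _ (Measurable.lintegral_prod_right (by fun_prop)),
          lintegral_lintegral_swap (by fun_prop)]
    _ = C ^ 2 * ((∫⁻ w, F w ^ 2 ∂μ) * ∫⁻ y, H y ^ 2 ∂μ) := by
        rw [← lintegral_mul_const _ (by fun_prop)]
        congr! with w
        simp only [mul_pow]
        rw [lintegral_const_mul _ (by fun_prop), lintegral_sub_right_eq_self (fun y => H y ^ 2)]

variable [μ.IsNegInvariant]

theorem eLpNorm_kernelConv_le_of_input (hK : Measurable (Function.uncurry K)) (hF : Measurable F)
    (hH : Measurable H) (hC : ∀ w, ∫⁻ z, K z w ^ 2 ∂μ ≤ C ^ 2) :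
    eLpNorm (kernelConv μ K F H) 2 μ ≤ C * (eLpNorm F 2 μ * eLpNorm H 2 μ) := by
  rw [← ENNReal.pow_le_pow_left_iff two_ne_zero]
  simp only [mul_pow, eLpNorm_two_sq_eq_lintegral]
  calc ∫⁻ z, kernelConv μ K F H z ^ 2 ∂μ
      ≤ ∫⁻ z, (∫⁻ w, (K z w * F w) ^ 2 ∂μ) * ∫⁻ y, H y ^ 2 ∂μ ∂μ := by
        gcongr with z
        rw [← lintegral_sub_left_eq_self (fun y => H y ^ 2) z]
        simp only [kernelConv, ← mul_assoc]
        exact lintegral_mul_sq_le (by fun_prop) (by fun_prop)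
    _ = (∫⁻ w, (∫⁻ z, K z w ^ 2 ∂μ) * F w ^ 2 ∂μ) * ∫⁻ y, H y ^ 2 ∂μ := by
        rw [lintegral_mul_const _ (Measurable.lintegral_prod_right (by fun_prop)),
          lintegral_lintegral_swap (by fun_prop)]
        congr! with w
        simp only [mul_pow]
        rw [lintegral_mul_const _ (by fun_prop)]
    _ ≤ (∫⁻ w, C ^ 2 * F w ^ 2 ∂μ) * ∫⁻ y, H y ^ 2 ∂μ := by gcongr with w; exact hC w
    _ = C ^ 2 * ((∫⁻ w, F w ^ 2 ∂μ) * ∫⁻ y, H y ^ 2 ∂μ) := by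
        rw [lintegral_const_mul _ (by fun_prop), mul_assoc]

theorem eLpNorm_kernelConv_le {A B : G → G → ℝ≥0∞} (hA : Measurable (Function.uncurry A))
    (hB : Measurable (Function.uncurry B)) (hF : Measurable F) (hH : Measurable H)
    (hK : ∀ z w, K z w ^ 2 ≤ A z w + B w (z - w) + B (z - w) w)
    (hAC : ∀ z, ∫⁻ w, A z w ∂μ ≤ C) (hBC : ∀ w, ∫⁻ y, B w y ∂μ ≤ C) :
    eLpNorm (kernelConv μ K F H) 2 μ ≤
      3 * C ^ (1 / 2 : ℝ) * (eLpNorm F 2 μ * eLpNorm H 2 μ) := by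
  set KA : G → G → ℝ≥0∞ := fun z w => A z w ^ (1 / 2 : ℝ) with hKA
  set KB : G → G → ℝ≥0∞ := fun z w => B w (z - w) ^ (1 / 2 : ℝ) with hKB
  have hKAm : Measurable (Function.uncurry KA) := by fun_prop
  have hKBm : Measurable (Function.uncurry KB) := by fun_prop
  have hKle (z w : G) : K z w ≤ KA z w + KB z w + KB z (z - w) := by
    simp only [hKA, hKB, sub_sub_cancel]
    refine (le_rpow_half_iff.2 (hK z w)).trans ((rpow_half_add_le _ _).trans ?_)
    gcongr
    exact rpow_half_add_le _ _
  have hKBC {F H : G → ℝ≥0∞} (hF : Measurable F) (hH : Measurable H) :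
      eLpNorm (kernelConv μ KB F H) 2 μ ≤ C ^ (1 / 2 : ℝ) * (eLpNorm F 2 μ * eLpNorm H 2 μ) :=
    eLpNorm_kernelConv_le_of_input hKBm hF hH fun w => by
      simpa only [hKB, rpow_half_sq, lintegral_sub_right_eq_self (B w)] using hBC w
  calc eLpNorm (kernelConv μ K F H) 2 μ
      ≤ eLpNorm (kernelConv μ (fun z w => KA z w + KB z w + KB z (z - w)) F H) 2 μ :=
        eLpNorm_mono_enorm (kernelConv_mono hKle F H)
    _ ≤ eLpNorm (kernelConv μ KA F H) 2 μ + eLpNorm (kernelConv μ KB F H) 2 μ +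
          eLpNorm (kernelConv μ KB H F) 2 μ := by
        rw [funext (kernelConv_swap KB H F)]
        refine (eLpNorm_kernelConv_add_le (by fun_prop) (by fun_prop) hF hH).trans ?_
        gcongr
        exact eLpNorm_kernelConv_add_le hKAm hKBm hF hH
    _ ≤ C ^ (1 / 2 : ℝ) * (eLpNorm F 2 μ * eLpNorm H 2 μ) +
          C ^ (1 / 2 : ℝ) * (eLpNorm F 2 μ * eLpNorm H 2 μ) +
          C ^ (1 / 2 : ℝ) * (eLpNorm H 2 μ * eLpNorm F 2 μ) := by
        gcongr
        · exact eLpNorm_kernelConv_le_of_output hKAm hF hH (by simpa only [hKA, rpow_half_sq])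
        · exact hKBC hF hH
        · exact hKBC hH hF
    _ = _ := by ring

end Kernel

local notation "⟪" x "⟫" => (1 + |x|)

section ChangeOfVariables

variable {φ φ' : ℝ → ℝ}

theorem setLIntegral_abs_deriv_mul_comp_le (hφ : ∀ x, HasDerivAt φ (φ' x) x) {S : Set ℝ}
    (hS : MeasurableSet S) (hconv : Convex ℝ S)
    (hsign : (∀ x ∈ S, 0 ≤ φ' x) ∨ ∀ x ∈ S, φ' x ≤ 0) (h : ℝ → ℝ≥0∞) :
    ∫⁻ x in S, ENNReal.ofReal |φ' x| * h (φ x) ≤ ∫⁻ y, h y := by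
  have hcont : ContinuousOn φ S := fun x _ => (hφ x).continuousAt.continuousWithinAt
  have hdiff : DifferentiableOn ℝ φ (interior S) := fun x _ =>
    (hφ x).differentiableAt.differentiableWithinAt
  have hderiv : ∀ x ∈ S, HasDerivWithinAt φ (φ' x) S x := fun x _ => (hφ x).hasDerivWithinAt
  refine le_trans (le_of_eq ?_) (setLIntegral_le_lintegral (φ '' S) h)
  rcases hsign with nonneg | nonpos
  · have hmono : MonotoneOn φ S := monotoneOn_of_deriv_nonneg hconv hcont hdiff fun x hx =>
      (hφ x).deriv.symm ▸ nonneg x (interior_subset hx)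
    rw [lintegral_image_eq_lintegral_deriv_mul_of_monotoneOn hS hderiv hmono]
    exact setLIntegral_congr_fun hS fun x hx => by simp only [abs_of_nonneg (nonneg x hx)]
  · have hanti : AntitoneOn φ S := antitoneOn_of_deriv_nonpos hconv hcont hdiff fun x hx =>
      (hφ x).deriv.symm ▸ nonpos x (interior_subset hx)
    rw [lintegral_image_eq_lintegral_deriv_mul_of_antitoneOn hS hderiv hanti]
    exact setLIntegral_congr_fun hS fun x hx => by simp only [abs_of_nonpos (nonpos x hx)]

theorem lintegral_abs_deriv_mul_comp_le (hφ : ∀ x, HasDerivAt φ (φ' x) x)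
    (hsign : (∀ x, 0 ≤ φ' x) ∨ ∀ x, φ' x ≤ 0) (h : ℝ → ℝ≥0∞) :
    ∫⁻ x, ENNReal.ofReal |φ' x| * h (φ x) ≤ ∫⁻ y, h y := by
  simpa using setLIntegral_abs_deriv_mul_comp_le hφ .univ convex_univ (by simpa using hsign) h

/-- The half-line on which the affine function `x ↦ m * x + n` is nonnegative (all or nothing when
`m = 0`). -/
def halfLine (m n : ℝ) : Set ℝ := {x | 0 ≤ m * x + n}

theorem measurableSet_halfLine (m n : ℝ) : MeasurableSet (halfLine m n) :=
  measurableSet_le (by fun_prop) (by fun_prop)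

theorem convex_halfLine (m n : ℝ) : Convex ℝ (halfLine m n) := by
  intro x hx y hy a b ha hb hab
  have : m * (a • x + b • y) + n = a * (m * x + n) + b * (m * y + n) := by
    simp only [smul_eq_mul]
    linear_combination (-n) * hab
  change 0 ≤ m * (a • x + b • y) + n
  exact this ▸ add_nonneg (mul_nonneg ha hx) (mul_nonneg hb hy)

theorem halfLine_union_halfLine_neg (m n : ℝ) : halfLine m n ∪ halfLine (-m) (-n) = univ := by
  ext x
  simp only [halfLine, mem_union, mem_ofPred_eq, mem_univ, iff_true]
  rcases le_total 0 (m * x + n) with h | h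
  · exact .inl h
  · exact .inr (by linarith)

theorem setLIntegral_quadratic_deriv_mul_comp_le {A m n m' n' : ℝ}
    (hφ : ∀ x, HasDerivAt φ (φ' x) x) (hφ' : ∀ x, φ' x = A * ((m * x + n) * (m' * x + n')))
    (h : ℝ → ℝ≥0∞) :
    ∫⁻ x in halfLine m n ∩ halfLine m' n', ENNReal.ofReal |φ' x| * h (φ x) ≤ ∫⁻ y, h y := by
  refine setLIntegral_abs_deriv_mul_comp_le hφ
    ((measurableSet_halfLine m n).inter (measurableSet_halfLine m' n'))
    ((convex_halfLine m n).inter (convex_halfLine m' n')) ?_ h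
  simp only [hφ']
  exact (le_total 0 A).imp (fun hA x hx => mul_nonneg hA (mul_nonneg hx.1 hx.2))
    (fun hA x hx => mul_nonpos_of_nonpos_of_nonneg hA (mul_nonneg hx.1 hx.2))

theorem lintegral_quadratic_deriv_mul_comp_le {A m n m' n' : ℝ}
    (hφ : ∀ x, HasDerivAt φ (φ' x) x) (hφ' : ∀ x, φ' x = A * ((m * x + n) * (m' * x + n')))
    (h : ℝ → ℝ≥0∞) : ∫⁻ x, ENNReal.ofReal |φ' x| * h (φ x) ≤ 4 * ∫⁻ y, h y := by
  set P := halfLine m n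
  set N := halfLine (-m) (-n)
  set P' := halfLine m' n'
  set N' := halfLine (-m') (-n')
  have cover : P ∩ P' ∪ P ∩ N' ∪ (N ∩ P' ∪ N ∩ N') = univ := by
    rw [← inter_union_distrib_left, ← inter_union_distrib_left, halfLine_union_halfLine_neg,
      inter_univ, inter_univ, halfLine_union_halfLine_neg]
  rw [← setLIntegral_univ, ← cover]
  calc _ ≤ _ := (lintegral_union_le _ _ _).trans
        (add_le_add (lintegral_union_le _ _ _) (lintegral_union_le _ _ _))
    _ ≤ (∫⁻ y, h y) + (∫⁻ y, h y) + ((∫⁻ y, h y) + ∫⁻ y, h y) := by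
        refine add_le_add (add_le_add ?_ ?_) (add_le_add ?_ ?_)
        · exact setLIntegral_quadratic_deriv_mul_comp_le hφ hφ' h
        · exact setLIntegral_quadratic_deriv_mul_comp_le (A := -A) hφ (by grind) h
        · exact setLIntegral_quadratic_deriv_mul_comp_le (A := -A) hφ (by grind) h
        · exact setLIntegral_quadratic_deriv_mul_comp_le (A := A) hφ (by grind) h
    _ = _ := by ring

end ChangeOfVariables

section Bracket

variable {β : ℝ}

theorem rpow_neg_bracket_le_one (hβ : 0 ≤ β) (x : ℝ) : ⟪x⟫ ^ (-β) ≤ 1 :=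
  Real.rpow_le_one_of_one_le_of_nonpos (by simp) (by simpa)

/-- `∫ ⟨x⟩^{-β} dx`, where `⟨x⟩ = 1 + |x|`. -/
noncomputable def bracketIntegral (β : ℝ) : ℝ≥0∞ := ∫⁻ x : ℝ, ENNReal.ofReal (⟪x⟫ ^ (-β))

theorem bracketIntegral_ne_top (hβ : 1 < β) : bracketIntegral β ≠ ⊤ :=
  (integrable_one_add_norm (by simpa using hβ)).lintegral_lt_top.ne

theorem rpow_neg_bracket_le_of_abs_le (hβ : 0 ≤ β) {x y : ℝ} (h : |x| ≤ |y|) :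
    ⟪y⟫ ^ (-β) ≤ 2 ^ β * ⟪x - y⟫ ^ (-β) := by
  have bracket_sub_le : ⟪x - y⟫ / 2 ≤ ⟪y⟫ := by linarith [abs_sub x y]
  calc ⟪y⟫ ^ (-β) ≤ (⟪x - y⟫ / 2) ^ (-β) :=
        Real.rpow_le_rpow_of_nonpos (by positivity) bracket_sub_le (by simpa)
    _ = 2 ^ β * ⟪x - y⟫ ^ (-β) := by
        rw [Real.div_rpow (by positivity) two_pos.le, Real.rpow_neg two_pos.le, div_inv_eq_mul,
          mul_comm]

theorem rpow_neg_bracket_mul_le (hβ : 0 ≤ β) (x y : ℝ) :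
    ⟪x⟫ ^ (-β) * ⟪y⟫ ^ (-β) ≤ 2 ^ β * ⟪x - y⟫ ^ (-β) * (⟪x⟫ ^ (-β) + ⟪y⟫ ^ (-β)) := by
  rcases le_total |x| |y| with h | h
  · nlinarith [mul_le_mul_of_nonneg_left (rpow_neg_bracket_le_of_abs_le hβ h)
      (by positivity : 0 ≤ ⟪x⟫ ^ (-β)), (by positivity : 0 ≤ 2 ^ β * ⟪x - y⟫ ^ (-β) * ⟪y⟫ ^ (-β))]
  · rw [abs_sub_comm x y]
    nlinarith [mul_le_mul_of_nonneg_left (rpow_neg_bracket_le_of_abs_le hβ h)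
      (by positivity : 0 ≤ ⟪y⟫ ^ (-β)), (by positivity : 0 ≤ 2 ^ β * ⟪y - x⟫ ^ (-β) * ⟪x⟫ ^ (-β))]

theorem lintegral_bracket_mul_bracket_le (hβ : 0 ≤ β) (p q : ℝ) :
    ∫⁻ t, ENNReal.ofReal (⟪t - p⟫ ^ (-β) * ⟪t - q⟫ ^ (-β)) ≤
      ENNReal.ofReal (2 ^ β * ⟪p - q⟫ ^ (-β)) * (2 * bracketIntegral β) := by
  have lintegral_shift (r : ℝ) :
      ∫⁻ t, ENNReal.ofReal (⟪t - r⟫ ^ (-β)) = bracketIntegral β :=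
    lintegral_sub_right_eq_self (fun t => ENNReal.ofReal (⟪t⟫ ^ (-β))) r
  calc _ ≤ ∫⁻ t, ENNReal.ofReal (2 ^ β * ⟪p - q⟫ ^ (-β)) *
          (ENNReal.ofReal (⟪t - p⟫ ^ (-β)) + ENNReal.ofReal (⟪t - q⟫ ^ (-β))) := by
        gcongr with t
        rw [← ENNReal.ofReal_add (by positivity) (by positivity),
          ← ENNReal.ofReal_mul (by positivity), abs_sub_comm p q]
        have := rpow_neg_bracket_mul_le hβ (t - p) (t - q)
        rw [sub_sub_sub_cancel_left] at this
        exact ENNReal.ofReal_le_ofReal this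
    _ = _ := by
        rw [lintegral_const_mul _ (by fun_prop), lintegral_add_left (by fun_prop),
          lintegral_shift, lintegral_shift, two_mul]

/-- A bump of height `√|l|` and width `1/√|l|`, with quadratically decaying tails. -/
noncomputable def bump (l v : ℝ) : ℝ := √|l| * ⟪√|l| * v⟫ ^ (-2 : ℝ)

theorem bump_nonneg (l v : ℝ) : 0 ≤ bump l v := by
  unfold bump; positivity

@[fun_prop]
theorem measurable_bump {α : Type*} [MeasurableSpace α] {l v : α → ℝ} (hl : Measurable l)
    (hv : Measurable v) : Measurable fun x => bump (l x) (v x) := by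
  unfold bump
  fun_prop

theorem lintegral_bump_sub_le (l c : ℝ) :
    ∫⁻ x, ENNReal.ofReal (bump l (x - c)) ≤ bracketIntegral 2 := by
  have hφ (x : ℝ) : HasDerivAt (fun x => √|l| * (x - c)) (√|l|) x := by
    simpa using ((hasDerivAt_id x).sub_const c).const_mul √|l|
  refine le_of_eq_of_le (lintegral_congr fun x => ?_)
    (lintegral_abs_deriv_mul_comp_le hφ (.inl fun _ => by positivity)
      fun y => ENNReal.ofReal (⟪y⟫ ^ (-2 : ℝ)))
  rw [bump, ENNReal.ofReal_mul (by positivity), abs_of_nonneg (by positivity : 0 ≤ √|l|)]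

theorem lintegral_weight_mul_bracket_mul_bracket_le (hβ : 0 ≤ β) {V p q : ℝ → ℝ} {D : ℝ≥0∞}
    (hV : Measurable V) (hp : Measurable p) (hq : Measurable q)
    (hD : ∫⁻ x, ENNReal.ofReal |V x| * ENNReal.ofReal (⟪p x - q x⟫ ^ (-β)) ≤ D) (l l' c c' : ℝ) :
    ∫⁻ w : ℝ × ℝ, ENNReal.ofReal ((|V w.2| + bump l (w.2 - c) + bump l' (w.2 - c')) *
        (⟪w.1 - p w.2⟫ ^ (-β) * ⟪w.1 - q w.2⟫ ^ (-β))) ≤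
      ENNReal.ofReal (2 ^ β) * (2 * bracketIntegral β) * (D + 2 * bracketIntegral 2) := by
  set W : ℝ → ℝ := fun x => |V x| + bump l (x - c) + bump l' (x - c') with hW
  have hW_nonneg (x : ℝ) : 0 ≤ W x :=
    add_nonneg (add_nonneg (abs_nonneg _) (bump_nonneg _ _)) (bump_nonneg _ _)
  set M : ℝ≥0∞ := ENNReal.ofReal (2 ^ β) * (2 * bracketIntegral β)
  have bump_bound (l c : ℝ) : ∫⁻ x, ENNReal.ofReal (bump l (x - c)) *
      ENNReal.ofReal (⟪p x - q x⟫ ^ (-β)) ≤ bracketIntegral 2 :=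
    (lintegral_mono fun x => mul_le_of_le_one_right' <| ENNReal.ofReal_le_one.2 <|
      rpow_neg_bracket_le_one hβ _).trans (lintegral_bump_sub_le l c)
  calc ∫⁻ w : ℝ × ℝ, ENNReal.ofReal (W w.2 * (⟪w.1 - p w.2⟫ ^ (-β) * ⟪w.1 - q w.2⟫ ^ (-β)))
      = ∫⁻ x, ENNReal.ofReal (W x) *
          ∫⁻ t, ENNReal.ofReal (⟪t - p x⟫ ^ (-β) * ⟪t - q x⟫ ^ (-β)) := by
        rw [Measure.volume_eq_prod, lintegral_prod_symm _ (by fun_prop)]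
        congr! with x
        simp only [ENNReal.ofReal_mul (hW_nonneg x)]
        exact lintegral_const_mul _ (by fun_prop)
    _ ≤ ∫⁻ x, M * (ENNReal.ofReal (W x) * ENNReal.ofReal (⟪p x - q x⟫ ^ (-β))) := by
        refine lintegral_mono fun x => ?_
        refine (mul_le_mul_right (lintegral_bracket_mul_bracket_le hβ _ _) _).trans_eq ?_
        rw [ENNReal.ofReal_mul (by positivity)]
        ring
    _ = M * ((∫⁻ x, ENNReal.ofReal |V x| * ENNReal.ofReal (⟪p x - q x⟫ ^ (-β))) +
          (∫⁻ x, ENNReal.ofReal (bump l (x - c)) * ENNReal.ofReal (⟪p x - q x⟫ ^ (-β))) +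
          ∫⁻ x, ENNReal.ofReal (bump l' (x - c')) * ENNReal.ofReal (⟪p x - q x⟫ ^ (-β))) := by
        rw [lintegral_const_mul _ (by fun_prop), ← lintegral_add_left (by fun_prop),
          ← lintegral_add_left (by fun_prop)]
        refine congrArg _ (lintegral_congr fun x => ?_)
        simp only [hW, ENNReal.ofReal_add (add_nonneg (abs_nonneg _) (bump_nonneg _ _))
          (bump_nonneg _ _), ENNReal.ofReal_add (abs_nonneg _) (bump_nonneg _ _)]
        ring
    _ ≤ M * (D + 2 * bracketIntegral 2) := by
        rw [two_mul, ← add_assoc]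
        gcongr
        · exact bump_bound l c
        · exact bump_bound l' c'

end Bracket

section Majorant

variable {a a₁ a₂ k l β : ℝ}

theorem lintegral_abs_mul_eq_inv_mul {A : ℝ} (hA : A ≠ 0) (V : ℝ → ℝ) (h : ℝ → ℝ≥0∞) :
    ∫⁻ x, ENNReal.ofReal |V x| * h x =
      ENNReal.ofReal |A|⁻¹ * ∫⁻ x, ENNReal.ofReal |A * V x| * h x := by
  rw [← lintegral_const_mul' _ _ ENNReal.ofReal_ne_top]
  congr! 2 with x
  rw [← mul_assoc, ← ENNReal.ofReal_mul (by positivity), abs_mul,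
    inv_mul_cancel_left₀ (abs_ne_zero.2 hA)]

theorem hasDerivAt_mul_cube (a x : ℝ) :
    HasDerivAt (fun x : ℝ => a * x ^ 3) (3 * (a * x ^ 2)) x := by
  convert! (hasDerivAt_pow 3 x).const_mul a using 1
  push_cast
  ring

theorem lintegral_output_velocity_mul_bracket_le (ha : a ≠ 0) (τ ξ : ℝ) :
    ∫⁻ x, ENNReal.ofReal |(x + (ξ - x)) * (x - (ξ - x))| *
        ENNReal.ofReal (⟪a * x ^ 3 - (τ - a * (ξ - x) ^ 3)⟫ ^ (-β)) ≤
      ENNReal.ofReal |3 * a|⁻¹ * (4 * bracketIntegral β) := by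
  have phase_deriv (x : ℝ) : HasDerivAt (fun x => a * x ^ 3 - (τ - a * (ξ - x) ^ 3))
      (3 * a * ((x + (ξ - x)) * (x - (ξ - x)))) x := by
    convert! (hasDerivAt_mul_cube a x).sub
      (((hasDerivAt_mul_cube a (ξ - x)).comp_const_sub ξ x).const_sub τ) using 1
    ring
  rw [lintegral_abs_mul_eq_inv_mul (mul_ne_zero three_ne_zero ha)]
  gcongr
  exact lintegral_quadratic_deriv_mul_comp_le (A := 3 * a) (m := 0) (n := ξ) (m' := 2) (n' := -ξ)
    phase_deriv (fun x => by ring) fun y => ENNReal.ofReal (⟪y⟫ ^ (-β))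

theorem lintegral_input_velocity_mul_bracket_le (a₁ a₂ t x : ℝ) :
    ∫⁻ y, ENNReal.ofReal |a₁ * (x + y) ^ 2 - a₂ * y ^ 2| *
        ENNReal.ofReal (⟪a₁ * (x + y) ^ 3 - t - a₂ * y ^ 3⟫ ^ (-β)) ≤
      ENNReal.ofReal |3|⁻¹ * (4 * bracketIntegral β) := by
  have phase_deriv (y : ℝ) : HasDerivAt (fun y => a₁ * (x + y) ^ 3 - t - a₂ * y ^ 3)
      (3 * (a₁ * (x + y) ^ 2 - a₂ * y ^ 2)) y := by
    convert! (((hasDerivAt_mul_cube a₁ (x + y)).comp_const_add x y).sub_const t).sub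
      (hasDerivAt_mul_cube a₂ y) using 1
    ring
  rw [lintegral_abs_mul_eq_inv_mul three_ne_zero]
  gcongr
  rcases le_or_gt (a₁ * a₂) 0 with opposite | same
  · refine (lintegral_abs_deriv_mul_comp_le phase_deriv ?_
      fun s => ENNReal.ofReal (⟪s⟫ ^ (-β))).trans (le_mul_of_one_le_left' (by norm_num))
    refine (mul_nonpos_iff.1 opposite).imp (fun h y => ?_) (fun h y => ?_) <;>
      nlinarith [mul_nonneg (sub_nonneg.2 h.1) (sq_nonneg (x + y)),
        mul_nonneg (sub_nonneg.2 h.2) (sq_nonneg y)]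
  · obtain ⟨r, hr⟩ : ∃ r, a₂ = a₁ * r ^ 2 := by
      have ha₁ : a₁ ≠ 0 := left_ne_zero_of_mul same.ne'
      have ratio_nonneg : 0 ≤ a₂ / a₁ := by
        rw [← mul_div_mul_left _ _ ha₁]
        exact div_nonneg same.le (mul_self_nonneg _)
      exact ⟨√(a₂ / a₁), by rw [Real.sq_sqrt ratio_nonneg, mul_div_cancel₀ _ ha₁]⟩
    exact lintegral_quadratic_deriv_mul_comp_le (A := 3 * a₁) (m := 1 - r) (n := x) (m' := 1 + r)
      (n' := x) phase_deriv (fun y => by rw [hr]; ring) fun s => ENNReal.ofReal (⟪s⟫ ^ (-β))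

/-- The modulation `τ - a ξ³`: the distance of `(τ, ξ)` to the cubic dispersion relation. -/
def modulation (a : ℝ) (z : ℝ × ℝ) : ℝ := z.1 - a * z.2 ^ 3

@[fun_prop]
theorem measurable_modulation {α : Type*} [MeasurableSpace α] {z : α → ℝ × ℝ} (hz : Measurable z) :
    Measurable fun x => modulation a (z x) := by
  unfold modulation
  fun_prop

/-- Frequency weight `|x² - y²|`, the difference of the group velocities of the two inputs, enlarged
near the lines `x = 0` and `x = y`. -/
noncomputable def outputWeight (x y : ℝ) : ℝ :=
  |(x + y) * (x - y)| + bump 1 x + bump (x + y) ((x - y) / 2)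

/-- Frequency weight `|a₁(x + y)² - a₂y²|`, the difference of the group velocities of the output and
of the input of frequency `y`, enlarged near the critical lines `x + y = k x` and `x + y = l x`. -/
noncomputable def inputWeight (a₁ a₂ k l x y : ℝ) : ℝ :=
  |a₁ * (x + y) ^ 2 - a₂ * y ^ 2| + bump x (x + y - k * x) + bump x (x + y - l * x)

/-- Majorant whose integral over the input `w` is bounded uniformly in the output `z`. -/
noncomputable def outputMajorant (a β : ℝ) (z w : ℝ × ℝ) : ℝ :=
  outputWeight w.2 (z - w).2 * (⟪modulation a w⟫ ^ (-β) * ⟪modulation a (z - w)⟫ ^ (-β))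

/-- Majorant whose integral over the input `η` is bounded uniformly in the other input `w`; the
output is `w + η`. -/
noncomputable def inputMajorant (a₁ a₂ k l β : ℝ) (w η : ℝ × ℝ) : ℝ :=
  inputWeight a₁ a₂ k l w.2 η.2 *
    (⟪modulation a₁ (w + η)⟫ ^ (-β) * ⟪modulation a₂ η⟫ ^ (-β))

theorem outputWeight_nonneg (x y : ℝ) : 0 ≤ outputWeight x y :=
  add_nonneg (add_nonneg (abs_nonneg _) (bump_nonneg _ _)) (bump_nonneg _ _)

theorem inputWeight_nonneg (a₁ a₂ k l x y : ℝ) : 0 ≤ inputWeight a₁ a₂ k l x y :=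
  add_nonneg (add_nonneg (abs_nonneg _) (bump_nonneg _ _)) (bump_nonneg _ _)

theorem outputMajorant_nonneg (a β : ℝ) (z w : ℝ × ℝ) : 0 ≤ outputMajorant a β z w :=
  mul_nonneg (outputWeight_nonneg _ _) (by positivity)

theorem inputMajorant_nonneg (a₁ a₂ k l β : ℝ) (w η : ℝ × ℝ) :
    0 ≤ inputMajorant a₁ a₂ k l β w η :=
  mul_nonneg (inputWeight_nonneg _ _ _ _ _ _) (by positivity)

theorem measurable_outputMajorant (a β : ℝ) :
    Measurable (Function.uncurry (outputMajorant a β)) := by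
  unfold outputMajorant outputWeight Function.uncurry
  fun_prop

theorem measurable_inputMajorant (a₁ a₂ k l β : ℝ) :
    Measurable (Function.uncurry (inputMajorant a₁ a₂ k l β)) := by
  unfold inputMajorant inputWeight Function.uncurry
  fun_prop

theorem exists_lintegral_outputMajorant_le (ha : a ≠ 0) (hβ : 1 < β) :
    ∃ C ≠ ⊤, ∀ z, ∫⁻ w, ENNReal.ofReal (outputMajorant a β z w) ≤ C := by
  have hJ := bracketIntegral_ne_top hβ
  have hJ₂ := bracketIntegral_ne_top one_lt_two
  refine ⟨_, by finiteness, fun ⟨τ, ξ⟩ => le_of_eq_of_le (lintegral_congr fun ⟨t, x⟩ => ?_)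
    (lintegral_weight_mul_bracket_mul_bracket_le (zero_le_one.trans hβ.le) (by fun_prop)
      (by fun_prop) (by fun_prop) (lintegral_output_velocity_mul_bracket_le ha τ ξ) 1 ξ 0 (ξ / 2))⟩
  simp only [outputMajorant, outputWeight, modulation, Prod.snd_sub, Prod.fst_sub]
  rw [abs_sub_comm t (τ - _), sub_zero, show (x - (ξ - x)) / 2 = x - ξ / 2 by ring,
    show τ - a * (ξ - x) ^ 3 - t = τ - t - a * (ξ - x) ^ 3 by ring, add_sub_cancel]

theorem exists_lintegral_inputMajorant_le (a₁ a₂ k l : ℝ) (hβ : 1 < β) :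
    ∃ C ≠ ⊤, ∀ w, ∫⁻ η, ENNReal.ofReal (inputMajorant a₁ a₂ k l β w η) ≤ C := by
  have hJ := bracketIntegral_ne_top hβ
  have hJ₂ := bracketIntegral_ne_top one_lt_two
  refine ⟨_, by finiteness, fun ⟨t, x⟩ => le_of_eq_of_le (lintegral_congr fun ⟨s, y⟩ => ?_)
    (lintegral_weight_mul_bracket_mul_bracket_le (zero_le_one.trans hβ.le) (by fun_prop)
      (by fun_prop) (by fun_prop) (lintegral_input_velocity_mul_bracket_le a₁ a₂ t x)
      x x ((k - 1) * x) ((l - 1) * x))⟩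
  simp only [inputMajorant, inputWeight, modulation, Prod.snd_add, Prod.fst_add]
  rw [show y - (k - 1) * x = x + y - k * x by ring, show y - (l - 1) * x = x + y - l * x by ring,
    show s - (a₁ * (x + y) ^ 3 - t) = t + s - a₁ * (x + y) ^ 3 by ring]

end Majorant

section Multiplier

variable {ρ α x y : ℝ}

/-- Exponents for which the multiplier estimates hold: `-ρ` is the Sobolev regularity and
`-α / 2` the exponent of the output modulation (the symbol is squared). -/
structure AdmissibleExponents (ρ α : ℝ) : Prop where
  le_one : α ≤ 1
  two_sub_le : 2 - α ≤ 2 * ρ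
  add_sub_le : 2 + 2 * ρ - 3 * α ≤ 1 / 2

theorem two_mul_abs_le_abs_add_add_abs_sub (x y : ℝ) : 2 * |x| ≤ |x + y| + |x - y| :=
  calc 2 * |x| = |x + y + (x - y)| := by
        rw [add_add_sub_cancel, ← two_mul, abs_mul, abs_two]
    _ ≤ |x + y| + |x - y| := abs_add_le _ _

theorem rpow_le_mul_rpow_of_le_mul {t u c e n : ℝ} (ht : 0 ≤ t) (hu : 0 ≤ u) (hc : 1 ≤ c)
    (htu : t ≤ c * u) (he : 0 ≤ e) (hen : e ≤ n) : t ^ e ≤ c ^ n * u ^ e :=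
  calc t ^ e ≤ (c * u) ^ e := Real.rpow_le_rpow ht htu he
    _ = c ^ e * u ^ e := Real.mul_rpow (by positivity) hu
    _ ≤ c ^ n * u ^ e := by gcongr

theorem abs_rpow_mul_rpow_neg_bracket_le_one {e γ : ℝ} (he : 0 ≤ e) (heγ : e ≤ γ) (t : ℝ) :
    |t| ^ e * ⟪t⟫ ^ (-γ) ≤ 1 :=
  calc |t| ^ e * ⟪t⟫ ^ (-γ) ≤ ⟪t⟫ ^ e * ⟪t⟫ ^ (-γ) := by gcongr; linarith
    _ = ⟪t⟫ ^ (e - γ) := by rw [← Real.rpow_add (by positivity), sub_eq_add_neg]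
    _ ≤ 1 := Real.rpow_le_one_of_one_le_of_nonpos (by simp) (by linarith)

/-- The squared symbol of `∂ₓ(fg)` in `H^{-ρ}` for inputs in `H^{-ρ}` of frequencies `x` and `y`. -/
noncomputable def multiplier (ρ x y : ℝ) : ℝ :=
  (x + y) ^ 2 * ⟪x + y⟫ ^ (-(2 * ρ)) * (⟪x⟫ ^ (2 * ρ) * ⟪y⟫ ^ (2 * ρ))

/-- What remains of `multiplier` at frequencies `1 ≤ |x|, |y|` after `|(x + y) x y| ^ (-α)` has been
gained from the resonance function. -/
noncomputable def resonantMultiplier (ρ α x y : ℝ) : ℝ :=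
  |x + y| ^ (2 - α) * ⟪x + y⟫ ^ (-(2 * ρ)) * |x * y| ^ (2 * ρ - α)

theorem multiplier_nonneg (ρ x y : ℝ) : 0 ≤ multiplier ρ x y := by
  unfold multiplier; positivity

theorem multiplier_comm (ρ x y : ℝ) : multiplier ρ x y = multiplier ρ y x := by
  simp only [multiplier, add_comm x y, mul_comm (⟪x⟫ ^ (2 * ρ))]

theorem multiplier_le_of_abs_le_one (hρ0 : 0 ≤ ρ) (hρ1 : ρ ≤ 1) (hx : |x| ≤ 1) :
    multiplier ρ x y ≤ 16 * (x + y) ^ 2 := by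
  have hxr : ⟪x⟫ ^ (2 * ρ) ≤ 2 ^ (2 : ℝ) * 1 ^ (2 * ρ) :=
    rpow_le_mul_rpow_of_le_mul (by positivity) zero_le_one one_le_two (by linarith) (by linarith)
      (by linarith)
  have hyr : ⟪y⟫ ^ (2 * ρ) ≤ 2 ^ (2 : ℝ) * ⟪x + y⟫ ^ (2 * ρ) :=
    rpow_le_mul_rpow_of_le_mul (by positivity) (by positivity) one_le_two
      (by linarith [abs_nonneg (x + y), add_sub_cancel_left x y ▸ abs_sub (x + y) x])
      (by linarith) (by linarith)
  calc multiplier ρ x y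
      ≤ (x + y) ^ 2 * ⟪x + y⟫ ^ (-(2 * ρ)) *
          (2 ^ (2 : ℝ) * 1 ^ (2 * ρ) * (2 ^ (2 : ℝ) * ⟪x + y⟫ ^ (2 * ρ))) := by
        unfold multiplier; gcongr
    _ = 16 * (x + y) ^ 2 * (⟪x + y⟫ ^ (2 * ρ) * (⟪x + y⟫ ^ (2 * ρ))⁻¹) := by
        rw [Real.rpow_neg (by positivity), Real.one_rpow]
        norm_num
        ring
    _ = 16 * (x + y) ^ 2 := by rw [mul_inv_cancel₀ (by positivity), mul_one]

theorem one_le_mul_bump_one (hx : |x| ≤ 4) : 1 ≤ 25 * bump 1 x := by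
  rw [bump, abs_one, Real.sqrt_one, one_mul, one_mul, Real.rpow_neg (by positivity),
    ← div_eq_mul_inv, one_le_div (by positivity), Real.rpow_two]
  nlinarith [abs_nonneg x]

theorem add_sq_le_of_abs_le_one (h : |x| ≤ 1 ∨ |y| ≤ 1) :
    (x + y) ^ 2 ≤ 625 * (|(x + y) * (x - y)| + bump 1 x) := by
  by_cases small : |x| ≤ 4 ∧ |y| ≤ 4
  · have add_le : |x + y| ≤ 5 := (abs_add_le x y).trans (by rcases h with h | h <;> linarith)
    have add_sq_le : (x + y) ^ 2 ≤ 25 := by nlinarith [sq_abs (x + y), abs_nonneg (x + y)]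
    linarith [one_le_mul_bump_one small.1, abs_nonneg ((x + y) * (x - y))]
  · have add_le : |x + y| ≤ 2 * |x - y| := by
      rw [not_and_or, not_le, not_le] at small
      have := abs_add_le x y
      have := abs_sub_abs_le_abs_sub x y
      have := abs_sub_abs_le_abs_sub y x
      rw [abs_sub_comm y x] at this
      rcases h with h | h <;> rcases small with h' | h' <;> linarith
    have := mul_le_mul_of_nonneg_left add_le (abs_nonneg (x + y))
    rw [abs_mul, ← sq_abs (x + y), sq]
    linarith [bump_nonneg 1 x, mul_nonneg (abs_nonneg (x + y)) (abs_nonneg (x - y))]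

theorem multiplier_le_outputWeight (hρ0 : 0 ≤ ρ) (hρ1 : ρ ≤ 1) (h : |x| ≤ 1 ∨ |y| ≤ 1) :
    multiplier ρ x y ≤ 10000 * outputWeight x y := by
  have le_add_sq : multiplier ρ x y ≤ 16 * (x + y) ^ 2 := by
    rcases h with h | h
    · exact multiplier_le_of_abs_le_one hρ0 hρ1 h
    · rw [multiplier_comm, add_comm x y]
      exact multiplier_le_of_abs_le_one hρ0 hρ1 h
  rw [outputWeight]
  linarith [add_sq_le_of_abs_le_one h, bump_nonneg (x + y) ((x - y) / 2)]

theorem resonantMultiplier_comm (ρ α x y : ℝ) :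
    resonantMultiplier ρ α x y = resonantMultiplier ρ α y x := by
  simp only [resonantMultiplier, add_comm x y, mul_comm x y]

theorem multiplier_mul_rpow_le_resonantMultiplier {c R : ℝ} (hρ0 : 0 ≤ ρ) (hρ1 : ρ ≤ 1)
    (hα : 0 ≤ α) (hc : 0 < c) (hx : 1 ≤ |x|) (hy : 1 ≤ |y|) (hR : c * |(x + y) * x * y| ≤ |R|) :
    multiplier ρ x y * ⟪R⟫ ^ (-α) ≤ 16 * c ^ (-α) * resonantMultiplier ρ α x y := by
  rcases eq_or_ne (x + y) 0 with h0 | h0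
  · simp only [multiplier, h0, zero_pow two_ne_zero, zero_mul]
    unfold resonantMultiplier
    positivity
  have hz : 0 < |x + y| := abs_pos.2 h0
  have hxy : 0 < |x * y| := by rw [abs_mul]; positivity
  have bracket_rpow_le {t : ℝ} (ht : 1 ≤ |t|) : ⟪t⟫ ^ (2 * ρ) ≤ 2 ^ (2 : ℝ) * |t| ^ (2 * ρ) :=
    rpow_le_mul_rpow_of_le_mul (by positivity) (by positivity) one_le_two (by linarith)
      (by linarith) (by linarith)
  have resonance_gain : ⟪R⟫ ^ (-α) ≤ c ^ (-α) * (|x + y| ^ (-α) * |x * y| ^ (-α)) := by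
    rw [← Real.mul_rpow hz.le hxy.le, ← Real.mul_rpow hc.le (by positivity)]
    refine Real.rpow_le_rpow_of_nonpos (by positivity) ?_ (by linarith)
    rw [mul_assoc, abs_mul] at hR
    linarith
  calc multiplier ρ x y * ⟪R⟫ ^ (-α)
      ≤ (x + y) ^ 2 * ⟪x + y⟫ ^ (-(2 * ρ)) *
          ((2 ^ (2 : ℝ) * |x| ^ (2 * ρ)) * (2 ^ (2 : ℝ) * |y| ^ (2 * ρ))) *
          (c ^ (-α) * (|x + y| ^ (-α) * |x * y| ^ (-α))) := by
        unfold multiplier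
        gcongr
        · exact bracket_rpow_le hx
        · exact bracket_rpow_le hy
    _ = 16 * c ^ (-α) * resonantMultiplier ρ α x y := by
        rw [resonantMultiplier, sub_eq_add_neg 2, Real.rpow_add hz, sub_eq_add_neg (2 * ρ),
          Real.rpow_add hxy, abs_mul x y,
          Real.mul_rpow (z := 2 * ρ) (abs_nonneg x) (abs_nonneg y)]
        simp only [Real.rpow_two, sq_abs]
        ring

namespace AdmissibleExponents

theorem resonantMultiplier_le_abs_mul (h : AdmissibleExponents ρ α) (hxy : 1 ≤ |x * y|) :
    resonantMultiplier ρ α x y ≤ |x * y| := by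
  obtain ⟨h₁, h₂, h₃⟩ := h
  calc resonantMultiplier ρ α x y ≤ 1 * |x * y| ^ (1 : ℝ) := by
        unfold resonantMultiplier
        gcongr
        · exact abs_rpow_mul_rpow_neg_bracket_le_one (by linarith) h₂ _
        · linarith
    _ = |x * y| := by rw [one_mul, Real.rpow_one]

theorem resonantMultiplier_le_abs_add_mul_abs_sub (h : AdmissibleExponents ρ α)
    (hv : 1 ≤ |x - y|) (hzv : 2 * |x + y| ≤ |x - y|) :
    resonantMultiplier ρ α x y ≤ |x + y| * |x - y| := by
  obtain ⟨h₁, h₂, h₃⟩ := h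
  have abs_mul_le : |x * y| ≤ |x - y| ^ (2 : ℝ) := by
    rw [Real.rpow_two, abs_le]
    constructor <;> nlinarith [sq_abs (x - y), sq_abs (x + y), abs_nonneg (x + y)]
  have inputs_le : |x * y| ^ (2 * ρ - α) ≤ |x - y| :=
    calc |x * y| ^ (2 * ρ - α) ≤ (|x - y| ^ (2 : ℝ)) ^ (2 * ρ - α) :=
          Real.rpow_le_rpow (abs_nonneg _) abs_mul_le (by linarith)
      _ = |x - y| ^ (2 * (2 * ρ - α)) := (Real.rpow_mul (abs_nonneg _) _ _).symm
      _ ≤ |x - y| ^ (1 : ℝ) := Real.rpow_le_rpow_of_exponent_le hv (by linarith)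
      _ = |x - y| := Real.rpow_one _
  calc resonantMultiplier ρ α x y
      = |x + y| * (|x + y| ^ (1 - α) * ⟪x + y⟫ ^ (-(2 * ρ))) * |x * y| ^ (2 * ρ - α) := by
        rw [resonantMultiplier, show 2 - α = 1 + (1 - α) by ring,
          Real.rpow_one_add' (abs_nonneg _) (by linarith), mul_assoc |x + y|]
    _ ≤ |x + y| * 1 * |x - y| := by
        gcongr
        exact abs_rpow_mul_rpow_neg_bracket_le_one (by linarith) (by linarith) _
    _ = |x + y| * |x - y| := by rw [mul_one]

theorem resonantMultiplier_le_sqrt (h : AdmissibleExponents ρ α) (hz : 1 ≤ 3 * |x + y|)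
    (hxy : |x * y| ≤ 18 * |x + y| ^ 2) : resonantMultiplier ρ α x y ≤ 36 * √|x + y| := by
  obtain ⟨h₁, h₂, h₃⟩ := h
  unfold resonantMultiplier
  set z := |x + y|
  have hz0 : 0 < z := by linarith
  have output_le : ⟪x + y⟫ ^ (-(2 * ρ)) ≤ z ^ (-(2 * ρ)) :=
    Real.rpow_le_rpow_of_nonpos hz0 (by linarith) (by linarith)
  have inputs_le : |x * y| ^ (2 * ρ - α) ≤ 18 * z ^ (4 * ρ - 2 * α) := by
    have := rpow_le_mul_rpow_of_le_mul (e := 2 * ρ - α) (n := 1) (abs_nonneg _) (sq_nonneg z)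
      (by norm_num) hxy (by linarith) (by linarith)
    rwa [Real.rpow_one, ← Real.rpow_two, ← Real.rpow_mul hz0.le, mul_sub, ← mul_assoc,
      show (2 : ℝ) * 2 = 4 by norm_num] at this
  have power_le : z ^ (2 + 2 * ρ - 3 * α) ≤ 2 * √z :=
    calc z ^ (2 + 2 * ρ - 3 * α) ≤ (3 * z) ^ (2 + 2 * ρ - 3 * α) :=
          Real.rpow_le_rpow hz0.le (by linarith) (by linarith)
      _ ≤ (3 * z) ^ (1 / 2 : ℝ) := Real.rpow_le_rpow_of_exponent_le hz h₃
      _ = √3 * √z := by rw [← Real.sqrt_eq_rpow, Real.sqrt_mul (by norm_num)]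
      _ ≤ 2 * √z := by
          gcongr
          exact Real.sqrt_le_iff.2 (by norm_num)
  calc z ^ (2 - α) * ⟪x + y⟫ ^ (-(2 * ρ)) * |x * y| ^ (2 * ρ - α)
      ≤ z ^ (2 - α) * z ^ (-(2 * ρ)) * (18 * z ^ (4 * ρ - 2 * α)) := by gcongr
    _ = 18 * z ^ (2 + 2 * ρ - 3 * α) := by
        rw [show 2 + 2 * ρ - 3 * α = 2 - α + -(2 * ρ) + (4 * ρ - 2 * α) by ring,
          Real.rpow_add hz0, Real.rpow_add hz0]
        ring
    _ ≤ 36 * √z := by linarith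

end AdmissibleExponents

theorem sqrt_abs_le_add_bump {l v B c : ℝ} (hc : 0 < c) (hB : c * (|l| * |v|) ≤ B) :
    √|l| ≤ c⁻¹ * B + 4 * bump l v := by
  have le_inv_mul : |l| * |v| ≤ c⁻¹ * B := (le_inv_mul_iff₀ hc).2 hB
  have sqrt_sq : √|l| * √|l| = |l| := Real.mul_self_sqrt (abs_nonneg l)
  rcases le_total (√|l| * |v|) 1 with near | far
  · have quarter_le : 1 / 4 ≤ ⟪√|l| * v⟫ ^ (-2 : ℝ) := by
      rw [Real.rpow_neg (by positivity), one_div, Real.rpow_two, abs_mul,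
        abs_of_nonneg (Real.sqrt_nonneg _)]
      gcongr
      nlinarith [mul_nonneg (Real.sqrt_nonneg |l|) (abs_nonneg v)]
    have := mul_le_mul_of_nonneg_left quarter_le (Real.sqrt_nonneg |l|)
    rw [bump]
    linarith [(by positivity : 0 ≤ |l| * |v|)]
  · have := mul_le_mul_of_nonneg_left far (Real.sqrt_nonneg |l|)
    rw [← mul_assoc, sqrt_sq] at this
    linarith [bump_nonneg l v]

theorem AdmissibleExponents.resonantMultiplier_le_outputWeight (h : AdmissibleExponents ρ α)
    (hx : 1 ≤ |x|) : resonantMultiplier ρ α x y ≤ 144 * outputWeight x y := by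
  have hxz := two_mul_abs_le_abs_add_add_abs_sub x y
  have hprod : 0 ≤ |x + y| * |x - y| := by positivity
  rw [outputWeight, abs_mul]
  rcases le_total (2 * |x + y|) |x - y| with hzv | hvz
  · linarith [h.resonantMultiplier_le_abs_add_mul_abs_sub (by linarith) hzv, bump_nonneg 1 x,
      bump_nonneg (x + y) ((x - y) / 2)]
  · have abs_mul_le : |x * y| ≤ 18 * |x + y| ^ 2 := by
      rw [sq_abs, abs_le]
      constructor <;> nlinarith [sq_abs (x - y), sq_abs (x + y), abs_nonneg (x - y)]
    have := sqrt_abs_le_add_bump (l := x + y) (v := (x - y) / 2) (B := |x + y| * |x - y|) two_pos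
      (by rw [abs_div, abs_two]; linarith)
    linarith [h.resonantMultiplier_le_sqrt (by linarith) abs_mul_le, bump_nonneg 1 x]

end Multiplier

section Geometry

variable {a₁ a₂ c k l κ x y : ℝ}

/-- The resonance function: the output modulation minus both input modulations. -/
def resonance (a₁ a₂ x y : ℝ) : ℝ := a₂ * (x ^ 3 + y ^ 3) - a₁ * (x + y) ^ 3

theorem min_abs_mul_add_le_abs {A B u v : ℝ} (h : 0 < A * B) (hu : 0 ≤ u) (hv : 0 ≤ v) :
    min |A| |B| * (u + v) ≤ |A * u + B * v| := by
  have same_sign : |A * u + B * v| = |A| * u + |B| * v := by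
    rcases pos_and_pos_or_neg_and_neg_of_mul_pos h with ⟨hA, hB⟩ | ⟨hA, hB⟩
    · rw [abs_of_pos hA, abs_of_pos hB, abs_of_nonneg (by positivity)]
    · rw [abs_of_neg hA, abs_of_neg hB, abs_of_nonpos (by nlinarith)]
      ring
  rw [same_sign, mul_add]
  gcongr
  · exact min_le_left _ _
  · exact min_le_right _ _

theorem min_abs_pos_of_mul_pos {A B : ℝ} (h : 0 < A * B) : 0 < min |A| |B| :=
  lt_min (abs_pos.2 (left_ne_zero_of_mul h.ne')) (abs_pos.2 (right_ne_zero_of_mul h.ne'))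

theorem min_abs_mul_le_abs_resonance (h : 0 < (a₂ / 4 - a₁) * (3 * a₂ / 4)) (x y : ℝ) :
    min |a₂ / 4 - a₁| |3 * a₂ / 4| * |(x + y) * x * y| ≤ |resonance a₁ a₂ x y| := by
  have abs_mul_le : |x * y| ≤ (x + y) ^ 2 + (x - y) ^ 2 := by
    rw [abs_le]
    constructor <;> nlinarith [sq_nonneg (x + y), sq_nonneg (x - y)]
  calc min |a₂ / 4 - a₁| |3 * a₂ / 4| * |(x + y) * x * y|
      = |x + y| * (min |a₂ / 4 - a₁| |3 * a₂ / 4| * |x * y|) := by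
        rw [mul_assoc (x + y), abs_mul]
        ring
    _ ≤ |x + y| * (min |a₂ / 4 - a₁| |3 * a₂ / 4| * ((x + y) ^ 2 + (x - y) ^ 2)) := by gcongr
    _ ≤ |x + y| * |(a₂ / 4 - a₁) * (x + y) ^ 2 + 3 * a₂ / 4 * (x - y) ^ 2| := by
        gcongr
        exact min_abs_mul_add_le_abs h (sq_nonneg _) (sq_nonneg _)
    _ = |resonance a₁ a₂ x y| := by
        rw [← abs_mul, resonance]
        ring_nf

theorem exists_mul_le_abs_resonance (ha₁ : a₁ ≠ 0)
    (hratio : a₂ / a₁ < 0 ∨ a₂ / a₁ = 1 ∨ 4 < a₂ / a₁) :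
    ∃ c > 0, ∀ x y, c * |(x + y) * x * y| ≤ |resonance a₁ a₂ x y| := by
  obtain ⟨r, rfl⟩ : ∃ r, a₂ = a₁ * r := ⟨a₂ / a₁, (mul_div_cancel₀ _ ha₁).symm⟩
  rw [mul_div_cancel_left₀ _ ha₁] at hratio
  have definite (h : 0 < (r / 4 - 1) * (3 * r / 4)) :
      0 < (a₁ * r / 4 - a₁) * (3 * (a₁ * r) / 4) := by
    have := mul_pos (sq_pos_of_ne_zero ha₁) h
    linarith
  rcases hratio with neg | rfl | large
  · have h := definite (by nlinarith)
    exact ⟨_, min_abs_pos_of_mul_pos h, min_abs_mul_le_abs_resonance h⟩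
  · refine ⟨|3 * a₁|, by positivity, fun x y => le_of_eq ?_⟩
    rw [← abs_mul, ← abs_neg, resonance]
    ring_nf
  · have h := definite (by nlinarith)
    exact ⟨_, min_abs_pos_of_mul_pos h, min_abs_mul_le_abs_resonance h⟩

/-- The velocity difference `a₁ (x + y)² - a₂ y²` controls `x y` away from the critical lines
`x + y = k x` and `x + y = l x`. Near them it still controls the distance to one of the lines, and
the output frequency is not small. -/
def VelocityDichotomy (a₁ a₂ c k l : ℝ) : Prop :=
  ∀ x y, c * |x * y| ≤ |a₁ * (x + y) ^ 2 - a₂ * y ^ 2| ∨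
    |x| ≤ 3 * |x + y| ∧ |y| ≤ 2 * |x| ∧
      (c * (|x| * |x + y - k * x|) ≤ |a₁ * (x + y) ^ 2 - a₂ * y ^ 2| ∨
        c * (|x| * |x + y - l * x|) ≤ |a₁ * (x + y) ^ 2 - a₂ * y ^ 2|)

theorem velocityDichotomy_of_mul_neg (h : 0 < a₁ * -a₂) :
    VelocityDichotomy a₁ a₂ (min |a₁| |-a₂| / 2) 0 0 := by
  refine fun x y => .inl ?_
  have abs_mul_le : |x * y| ≤ 2 * ((x + y) ^ 2 + y ^ 2) := by
    rw [abs_le]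
    constructor <;> nlinarith [sq_nonneg (x + 2 * y), sq_nonneg x, sq_nonneg y]
  calc min |a₁| |-a₂| / 2 * |x * y| ≤ min |a₁| |-a₂| * ((x + y) ^ 2 + y ^ 2) := by
        nlinarith [min_abs_pos_of_mul_pos h]
    _ ≤ |a₁ * (x + y) ^ 2 + -a₂ * y ^ 2| := min_abs_mul_add_le_abs h (sq_nonneg _) (sq_nonneg _)
    _ = |a₁ * (x + y) ^ 2 - a₂ * y ^ 2| := by rw [neg_mul, ← sub_eq_add_neg]

theorem velocityDichotomy_self (a : ℝ) : VelocityDichotomy a a (|a| / 2) (1 / 2) (1 / 2) := by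
  intro x y
  have half : |x + y - 1 / 2 * x| = |x + 2 * y| / 2 := by
    rw [show x + y - 1 / 2 * x = (x + 2 * y) / 2 by ring, abs_div, abs_two]
  rw [show a * (x + y) ^ 2 - a * y ^ 2 = a * (x * (x + 2 * y)) by ring, abs_mul a,
    abs_mul x (x + 2 * y), half, abs_mul x y]
  rcases le_or_gt (|y| / 2) |x + 2 * y| with far | near
  · left
    calc |a| / 2 * (|x| * |y|) = |a| * (|x| * (|y| / 2)) := by ring
      _ ≤ |a| * (|x| * |x + 2 * y|) := by gcongr
  · have hy : |y| ≤ |x + 2 * y| + |x + y| := by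
      simpa [show x + 2 * y - (x + y) = y by ring] using abs_sub (x + 2 * y) (x + y)
    have hyx : 2 * |y| ≤ |x + 2 * y| + |x| := by
      simpa [show x + 2 * y - x = 2 * y by ring, abs_mul] using abs_sub (x + 2 * y) x
    have hx : |x| ≤ |x + y| + |y| := by simpa using abs_sub (x + y) y
    refine .inr ⟨by linarith, by linarith [abs_nonneg y], .inl ?_⟩
    linarith [(by positivity : 0 ≤ |a| * (|x| * |x + 2 * y|))]

theorem near_critical_line (hκ : 2 < |κ|) (h : |κ * y - (x + y)| < |y| / 2) :
    |x| ≤ 3 * |x + y| ∧ |y| ≤ 2 * |x| ∧ |x| / 2 ≤ |κ * y + (x + y)| ∧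
      |x + y - κ / (κ - 1) * x| ≤ |κ * y - (x + y)| := by
  have hx : |x| ≤ |x + y| + |y| := by simpa using abs_sub (x + y) y
  have hxy : |x + y| ≤ |x| + |y| := abs_add_le x y
  have hy : 2 * |y| ≤ |κ * y| := by
    rw [abs_mul]
    gcongr
  have hκy : |κ * y| ≤ |κ * y - (x + y)| + |x + y| := by
    simpa using abs_add_le (κ * y - (x + y)) (x + y)
  have hsum := two_mul_abs_le_abs_add_add_abs_sub (x + y) (κ * y)
  rw [add_comm (x + y), abs_sub_comm (x + y)] at hsum
  have one_le : 1 ≤ |κ - 1| := by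
    have := abs_sub_abs_le_abs_sub κ 1
    rw [abs_one] at this
    linarith
  have slope_ne : κ - 1 ≠ 0 := abs_pos.1 (by linarith)
  refine ⟨by linarith, by linarith, by linarith [abs_nonneg x, abs_nonneg y], ?_⟩
  calc |x + y - κ / (κ - 1) * x| ≤ |κ - 1| * |x + y - κ / (κ - 1) * x| :=
        le_mul_of_one_le_left (abs_nonneg _) one_le
    _ = |κ * y - (x + y)| := by
        rw [← abs_mul]
        congr 1
        field_simp
        ring

theorem abs_mul_le_four_mul_of_far (hκ : 2 ≤ |κ|) (h₁ : |y| / 2 ≤ |κ * y - (x + y)|)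
    (h₂ : |y| / 2 ≤ |κ * y + (x + y)|) :
    |x| * |y| ≤ 4 * (|κ * y - (x + y)| * |κ * y + (x + y)|) := by
  have hx : |x| ≤ |x + y| + |y| := by simpa using abs_sub (x + y) y
  have hy : 2 * |y| ≤ |κ * y| := by
    rw [abs_mul]
    gcongr
  have hsum := two_mul_abs_le_abs_add_add_abs_sub (x + y) (κ * y)
  have hsum' := two_mul_abs_le_abs_add_add_abs_sub (κ * y) (x + y)
  rw [add_comm (x + y), abs_sub_comm (x + y)] at hsum
  rcases le_total |κ * y - (x + y)| |κ * y + (x + y)| with hle | hle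
  · calc |x| * |y| = 4 * (|y| / 2 * (|x| / 2)) := by ring
      _ ≤ 4 * (|κ * y - (x + y)| * |κ * y + (x + y)|) := by
        gcongr
        linarith
  · calc |x| * |y| = 4 * (|x| / 2 * (|y| / 2)) := by ring
      _ ≤ 4 * (|κ * y - (x + y)| * |κ * y + (x + y)|) := by
        gcongr
        linarith

theorem velocityDichotomy_mul_sq (a : ℝ) (hκ : 2 < κ) :
    VelocityDichotomy a (a * κ ^ 2) (|a| / 4) (κ / (κ - 1)) (κ / (κ + 1)) := by
  intro x y
  have hκ' : 2 < |κ| := hκ.trans_le (le_abs_self κ)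
  set d₁ := |κ * y - (x + y)|
  set d₂ := |κ * y + (x + y)|
  have factor : |a * (x + y) ^ 2 - a * κ ^ 2 * y ^ 2| = |a| * (d₁ * d₂) := by
    rw [← abs_mul, ← abs_mul, ← abs_neg]
    ring_nf
  have near {e d d' : ℝ} (he : |e| ≤ d) (hd : |x| / 2 ≤ d') :
      |a| / 4 * (|x| * |e|) ≤ |a| * (d * d') :=
    calc |a| / 4 * (|x| * |e|) = |a| * (|e| * (|x| / 2)) / 2 := by ring
      _ ≤ |a| * (|e| * (|x| / 2)) := half_le_self (by positivity)
      _ ≤ |a| * (d * d') := by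
        have := (abs_nonneg e).trans he
        gcongr
  rw [factor]
  rcases lt_or_ge d₁ (|y| / 2) with h₁ | h₁
  · obtain ⟨hxz, hyx, hd₂, hline⟩ := near_critical_line hκ' h₁
    exact .inr ⟨hxz, hyx, .inl (near hline hd₂)⟩
  rcases lt_or_ge d₂ (|y| / 2) with h₂ | h₂
  · have flip : |-κ * y - (x + y)| = d₂ := abs_eq_abs.2 (.inr (by ring))
    have flip' : |-κ * y + (x + y)| = d₁ := abs_eq_abs.2 (.inr (by ring))
    obtain ⟨hxz, hyx, hd₁, hline⟩ := near_critical_line (κ := -κ)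
      (by rwa [abs_neg]) (flip.trans_lt h₂)
    rw [← neg_add', neg_div_neg_eq, flip] at hline
    rw [flip'] at hd₁
    exact .inr ⟨hxz, hyx, .inr (mul_comm d₂ d₁ ▸ near hline hd₁)⟩
  · have := mul_le_mul_of_nonneg_left (abs_mul_le_four_mul_of_far hκ'.le h₁ h₂) (abs_nonneg a)
    exact .inl (by rw [abs_mul]; linarith)

theorem exists_velocityDichotomy (ha₁ : a₁ ≠ 0)
    (hratio : a₂ / a₁ < 0 ∨ a₂ / a₁ = 1 ∨ 4 < a₂ / a₁) :
    ∃ c k l, 0 < c ∧ VelocityDichotomy a₁ a₂ c k l := by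
  obtain ⟨r, rfl⟩ : ∃ r, a₂ = a₁ * r := ⟨a₂ / a₁, (mul_div_cancel₀ _ ha₁).symm⟩
  rw [mul_div_cancel_left₀ _ ha₁] at hratio
  rcases hratio with neg | rfl | large
  · have opposite : 0 < a₁ * -(a₁ * r) := by nlinarith [sq_pos_of_ne_zero ha₁]
    exact ⟨_, _, _, half_pos (min_abs_pos_of_mul_pos opposite),
      velocityDichotomy_of_mul_neg opposite⟩
  · rw [mul_one]
    exact ⟨_, _, _, by positivity, velocityDichotomy_self a₁⟩
  · have two_lt : 2 < √r := Real.lt_sqrt_of_sq_lt (by linarith)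
    rw [← Real.sq_sqrt (by linarith : 0 ≤ r)]
    exact ⟨_, _, _, by positivity, velocityDichotomy_mul_sq a₁ two_lt⟩

theorem VelocityDichotomy.resonantMultiplier_le_inputWeight {ρ α : ℝ} (hc : 0 < c)
    (hG : VelocityDichotomy a₁ a₂ c k l) (h : AdmissibleExponents ρ α) (hx : 1 ≤ |x|)
    (hy : 1 ≤ |y|) :
    resonantMultiplier ρ α x y ≤ (72 * c⁻¹ + 288) * inputWeight a₁ a₂ k l x y := by
  set V := |a₁ * (x + y) ^ 2 - a₂ * y ^ 2|
  have hk := bump_nonneg x (x + y - k * x)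
  have hl := bump_nonneg x (x + y - l * x)
  have weight_ge : 72 * c⁻¹ * V + 288 * (bump x (x + y - k * x) + bump x (x + y - l * x)) ≤
      (72 * c⁻¹ + 288) * inputWeight a₁ a₂ k l x y := by
    rw [inputWeight]
    nlinarith [abs_nonneg (a₁ * (x + y) ^ 2 - a₂ * y ^ 2), mul_nonneg (inv_pos.2 hc).le hk,
      mul_nonneg (inv_pos.2 hc).le hl]
  refine le_trans ?_ weight_ge
  rcases hG x y with away | ⟨hxz, hyx, near⟩
  · have hxy : 1 ≤ |x * y| := abs_mul x y ▸ one_le_mul_of_one_le_of_one_le hx hy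
    have := (le_inv_mul_iff₀ hc).2 away
    linarith [h.resonantMultiplier_le_abs_mul hxy]
  · have hxy : |x * y| ≤ 18 * |x + y| ^ 2 := by
      rw [abs_mul]
      nlinarith [abs_nonneg x]
    have sqrt_le : √|x + y| ≤ 2 * √|x| := by
      rw [← Real.sqrt_sq two_pos.le, ← Real.sqrt_mul (by positivity)]
      exact Real.sqrt_le_sqrt (by linarith [abs_add_le x y])
    have := h.resonantMultiplier_le_sqrt (by linarith) hxy
    rcases near with hline | hline <;> linarith [sqrt_abs_le_add_bump hc hline]

end Geometry

section Symbol

variable {a₁ a₂ c c' k l ρ α β : ℝ} {z w : ℝ × ℝ}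

theorem rpow_neg_bracket_le_three_mul (hα0 : 0 ≤ α) (hα1 : α ≤ 1) {t u : ℝ} (h : |u| ≤ 3 * |t|) :
    ⟪t⟫ ^ (-α) ≤ 3 * ⟪u⟫ ^ (-α) := by
  have := rpow_le_mul_rpow_of_le_mul (n := 1) (by positivity) (by positivity) (by norm_num)
    (by linarith : ⟪u⟫ ≤ 3 * ⟪t⟫) hα0 hα1
  rw [Real.rpow_one] at this
  rwa [Real.rpow_neg (by positivity), Real.rpow_neg (by positivity), ← div_eq_mul_inv,
    le_div_iff₀ (by positivity), inv_mul_le_iff₀ (by positivity), mul_comm]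

theorem rpow_neg_bracket_mul_swap_le (hαβ : α ≤ β) {t u : ℝ} (h : |t| ≤ |u|) :
    ⟪t⟫ ^ (-α) * ⟪u⟫ ^ (-β) ≤ ⟪t⟫ ^ (-β) * ⟪u⟫ ^ (-α) := by
  have split (v : ℝ) : ⟪v⟫ ^ (-β) = ⟪v⟫ ^ (-α) * ⟪v⟫ ^ (α - β) := by
    rw [← Real.rpow_add (by positivity)]
    ring_nf
  have tail_le : ⟪u⟫ ^ (α - β) ≤ ⟪t⟫ ^ (α - β) :=
    Real.rpow_le_rpow_of_nonpos (by positivity) (by linarith) (by linarith)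
  calc ⟪t⟫ ^ (-α) * ⟪u⟫ ^ (-β) = ⟪t⟫ ^ (-α) * ⟪u⟫ ^ (-α) * ⟪u⟫ ^ (α - β) := by
        rw [split, mul_assoc]
    _ ≤ ⟪t⟫ ^ (-α) * ⟪u⟫ ^ (-α) * ⟪t⟫ ^ (α - β) := by gcongr
    _ = ⟪t⟫ ^ (-β) * ⟪u⟫ ^ (-α) := by
        rw [split t]
        ring

-- The largest of `s, p, q` dominates the resonance `s - p - q`; it is traded for the exponent `α`.
theorem rpow_neg_bracket_mul_le_resonance (hα0 : 0 ≤ α) (hα1 : α ≤ 1) (hαβ : α ≤ β) (s p q : ℝ) :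
    ⟪s⟫ ^ (-α) * (⟪p⟫ ^ (-β) * ⟪q⟫ ^ (-β)) ≤
      3 * ⟪s - p - q⟫ ^ (-α) * (⟪p⟫ ^ (-β) * ⟪q⟫ ^ (-β) + ⟪s⟫ ^ (-β) * ⟪q⟫ ^ (-β) +
        ⟪s⟫ ^ (-β) * ⟪p⟫ ^ (-β)) := by
  have sub_le : |s - p - q| ≤ |s| + |p| + |q| :=
    (abs_sub _ _).trans (add_le_add_left (abs_sub _ _) _)
  have gain {t : ℝ} (h : |s| + |p| + |q| ≤ 3 * |t|) {X : ℝ} (hX : 0 ≤ X) :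
      ⟪t⟫ ^ (-α) * X ≤ 3 * ⟪s - p - q⟫ ^ (-α) * X :=
    mul_le_mul_of_nonneg_right (rpow_neg_bracket_le_three_mul hα0 hα1 (sub_le.trans h)) hX
  have swap {t : ℝ} (h : |s| ≤ |t|) {X : ℝ} (hX : 0 ≤ X) :
      ⟪s⟫ ^ (-α) * ⟪t⟫ ^ (-β) * X ≤ ⟪t⟫ ^ (-α) * (⟪s⟫ ^ (-β) * X) := by
    linarith [mul_le_mul_of_nonneg_right (rpow_neg_bracket_mul_swap_le hαβ h) hX]
  have hs : 0 ≤ ⟪s⟫ ^ (-β) := by positivity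
  have hp : 0 ≤ ⟪p⟫ ^ (-β) := by positivity
  have hq : 0 ≤ ⟪q⟫ ^ (-β) := by positivity
  have hR : 0 ≤ 3 * ⟪s - p - q⟫ ^ (-α) := by positivity
  have hpq := mul_nonneg hR (mul_nonneg hp hq)
  have hsq := mul_nonneg hR (mul_nonneg hs hq)
  have hsp := mul_nonneg hR (mul_nonneg hs hp)
  rw [mul_add, mul_add]
  by_cases output_max : |p| ≤ |s| ∧ |q| ≤ |s|
  · linarith [gain (t := s) (by linarith) (mul_nonneg hp hq)]
  rcases le_total |p| |q| with hle | hle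
  · have hsq' : |s| ≤ |q| := by grind
    linarith [swap hsq' hp, gain (t := q) (by linarith) (mul_nonneg hs hp)]
  · have hsp' : |s| ≤ |p| := by grind
    linarith [swap hsp' hq, gain (t := p) (by linarith) (mul_nonneg hs hq)]

/-- The square of the kernel of the bilinear estimate on the Fourier side: `multiplier`, divided by
the modulation weights of the output `z` and of the inputs `w` and `z - w`. -/
noncomputable def symbol (a₁ a₂ ρ α β : ℝ) (z w : ℝ × ℝ) : ℝ :=
  multiplier ρ w.2 (z - w).2 * (⟪modulation a₁ z⟫ ^ (-α) *
    (⟪modulation a₂ w⟫ ^ (-β) * ⟪modulation a₂ (z - w)⟫ ^ (-β)))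

theorem measurable_symbol (a₁ a₂ ρ α β : ℝ) :
    Measurable (Function.uncurry (symbol a₁ a₂ ρ α β)) := by
  unfold symbol multiplier Function.uncurry
  fun_prop

theorem symbol_nonneg (a₁ a₂ ρ α β : ℝ) (z w : ℝ × ℝ) : 0 ≤ symbol a₁ a₂ ρ α β z w :=
  mul_nonneg (multiplier_nonneg _ _ _) (by positivity)

theorem modulation_sub_sub (a₁ a₂ : ℝ) (z w : ℝ × ℝ) :
    modulation a₁ z - modulation a₂ w - modulation a₂ (z - w) =
      resonance a₁ a₂ w.2 (z - w).2 := by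
  simp only [modulation, resonance, Prod.fst_sub, Prod.snd_sub]
  ring

theorem symbol_le_outputMajorant (hρ0 : 0 ≤ ρ) (hρ1 : ρ ≤ 1) (hα : 0 ≤ α)
    (h : |w.2| ≤ 1 ∨ |(z - w).2| ≤ 1) :
    symbol a₁ a₂ ρ α β z w ≤ 10000 * outputMajorant a₂ β z w := by
  rw [symbol, outputMajorant, ← mul_assoc 10000]
  refine mul_le_mul (multiplier_le_outputWeight hρ0 hρ1 h)
    (mul_le_of_le_one_left (by positivity) (rpow_neg_bracket_le_one hα _)) (by positivity) ?_
  exact mul_nonneg (by norm_num) (outputWeight_nonneg _ _)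

theorem symbol_le_resonantMultiplier_mul (hexp : AdmissibleExponents ρ α) (hρ : ρ ≤ 1)
    (hαβ : α ≤ β) (hc : 0 < c) (hR : c * |(w.2 + (z - w).2) * w.2 * (z - w).2| ≤
      |resonance a₁ a₂ w.2 (z - w).2|) (hx : 1 ≤ |w.2|) (hy : 1 ≤ |(z - w).2|) :
    symbol a₁ a₂ ρ α β z w ≤ 48 * c ^ (-α) * (resonantMultiplier ρ α w.2 (z - w).2 *
      (⟪modulation a₂ w⟫ ^ (-β) * ⟪modulation a₂ (z - w)⟫ ^ (-β) +
        ⟪modulation a₁ z⟫ ^ (-β) * ⟪modulation a₂ (z - w)⟫ ^ (-β) +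
        ⟪modulation a₁ z⟫ ^ (-β) * ⟪modulation a₂ w⟫ ^ (-β))) := by
  have hα0 : 0 ≤ α := by linarith [hexp.two_sub_le, hexp.add_sub_le]
  have hρ0 : 0 ≤ ρ := by linarith [hexp.two_sub_le, hexp.le_one]
  have resonance_gain := rpow_neg_bracket_mul_le_resonance hα0 hexp.le_one hαβ
    (modulation a₁ z) (modulation a₂ w) (modulation a₂ (z - w))
  have frequency_le := multiplier_mul_rpow_le_resonantMultiplier hρ0 hρ hα0 hc hx hy hR
  rw [modulation_sub_sub] at resonance_gain
  set m := multiplier ρ w.2 (z - w).2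
  set X := ⟪resonance a₁ a₂ w.2 (z - w).2⟫ ^ (-α)
  set T := ⟪modulation a₂ w⟫ ^ (-β) * ⟪modulation a₂ (z - w)⟫ ^ (-β) +
    ⟪modulation a₁ z⟫ ^ (-β) * ⟪modulation a₂ (z - w)⟫ ^ (-β) +
    ⟪modulation a₁ z⟫ ^ (-β) * ⟪modulation a₂ w⟫ ^ (-β)
  calc symbol a₁ a₂ ρ α β z w ≤ m * (3 * X * T) :=
        mul_le_mul_of_nonneg_left resonance_gain (multiplier_nonneg _ _ _)
    _ = m * X * (3 * T) := by ring
    _ ≤ 16 * c ^ (-α) * resonantMultiplier ρ α w.2 (z - w).2 * (3 * T) := by gcongr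
    _ = _ := by ring

theorem symbol_le_of_one_le_abs (hexp : AdmissibleExponents ρ α) (hρ : ρ ≤ 1) (hαβ : α ≤ β)
    (hc : 0 < c) (hR : ∀ x y, c * |(x + y) * x * y| ≤ |resonance a₁ a₂ x y|) (hc' : 0 < c')
    (hG : VelocityDichotomy a₁ a₂ c' k l) (hx : 1 ≤ |w.2|) (hy : 1 ≤ |(z - w).2|) :
    symbol a₁ a₂ ρ α β z w ≤ 48 * c ^ (-α) * ((144 + (72 * c'⁻¹ + 288)) *
      (outputMajorant a₂ β z w + inputMajorant a₁ a₂ k l β w (z - w) +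
        inputMajorant a₁ a₂ k l β (z - w) w)) := by
  refine (symbol_le_resonantMultiplier_mul hexp hρ hαβ hc (hR _ _) hx hy).trans ?_
  have hL : 144 ≤ 144 + (72 * c'⁻¹ + 288) := by linarith [inv_pos.2 hc']
  have hL' : 72 * c'⁻¹ + 288 ≤ 144 + (72 * c'⁻¹ + 288) := by linarith
  have output_le := (hexp.resonantMultiplier_le_outputWeight (y := (z - w).2) hx).trans
    (mul_le_mul_of_nonneg_right hL (outputWeight_nonneg _ _))
  have input_le := (hG.resonantMultiplier_le_inputWeight hc' hexp hx hy).trans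
    (mul_le_mul_of_nonneg_right hL' (inputWeight_nonneg _ _ _ _ _ _))
  have input_le' := (hG.resonantMultiplier_le_inputWeight hc' hexp hy hx).trans
    (mul_le_mul_of_nonneg_right hL' (inputWeight_nonneg _ _ _ _ _ _))
  rw [resonantMultiplier_comm] at input_le'
  simp only [outputMajorant, inputMajorant, add_sub_cancel, sub_add_cancel]
  gcongr 48 * c ^ (-α) * ?_
  have hS : 0 ≤ ⟪modulation a₁ z⟫ ^ (-β) := by positivity
  have hP : 0 ≤ ⟪modulation a₂ w⟫ ^ (-β) := by positivity
  have hQ : 0 ≤ ⟪modulation a₂ (z - w)⟫ ^ (-β) := by positivity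
  linarith [mul_le_mul_of_nonneg_right output_le (mul_nonneg hP hQ),
    mul_le_mul_of_nonneg_right input_le (mul_nonneg hS hQ),
    mul_le_mul_of_nonneg_right input_le' (mul_nonneg hS hP)]

theorem exists_symbol_le (ha₁ : a₁ ≠ 0) (hratio : a₂ / a₁ < 0 ∨ a₂ / a₁ = 1 ∨ 4 < a₂ / a₁)
    (hexp : AdmissibleExponents ρ α) (hρ : ρ ≤ 1) (hαβ : α ≤ β) :
    ∃ M k l, 0 ≤ M ∧ ∀ z w, symbol a₁ a₂ ρ α β z w ≤
      M * (outputMajorant a₂ β z w + inputMajorant a₁ a₂ k l β w (z - w) +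
        inputMajorant a₁ a₂ k l β (z - w) w) := by
  have hα0 : 0 ≤ α := by linarith [hexp.two_sub_le, hexp.add_sub_le]
  have hρ0 : 0 ≤ ρ := by linarith [hexp.two_sub_le, hexp.le_one]
  obtain ⟨c, hc, hR⟩ := exists_mul_le_abs_resonance ha₁ hratio
  obtain ⟨c', k, l, hc', hG⟩ := exists_velocityDichotomy ha₁ hratio
  set L := 48 * c ^ (-α) * (144 + (72 * c'⁻¹ + 288)) with hL_def
  have hL : 0 ≤ L := by positivity
  refine ⟨10000 + L, k, l, by positivity, fun z w => ?_⟩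
  have hout := outputMajorant_nonneg a₂ β z w
  have hin := add_nonneg (inputMajorant_nonneg a₁ a₂ k l β w (z - w))
    (inputMajorant_nonneg a₁ a₂ k l β (z - w) w)
  have hsmall (h : |w.2| ≤ 1 ∨ |(z - w).2| ≤ 1) : symbol a₁ a₂ ρ α β z w ≤ _ :=
    symbol_le_outputMajorant hρ0 hρ hα0 h
  rcases le_total |w.2| 1 with small | hx
  · nlinarith [hsmall (.inl small)]
  rcases le_total |(z - w).2| 1 with small | hy
  · nlinarith [hsmall (.inr small)]
  · have := symbol_le_of_one_le_abs hexp hρ hαβ hc hR hc' hG hx hy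
    rw [← mul_assoc, ← hL_def] at this
    linarith

end Symbol

section GevreyBourgain

variable {a a₁ a₂ ρ α β σ s b b' : ℝ}

/-- The square of the weight of the Gevrey–Bourgain norm. -/
noncomputable def gevreyWeight (a σ s b : ℝ) (z : ℝ × ℝ) : ℝ :=
  Real.exp (2 * σ * |z.2|) * ⟪z.2⟫ ^ (2 * s) * ⟪modulation a z⟫ ^ (2 * b)

/-- The function on the frequency plane whose `L²` norm is the Gevrey–Bourgain norm of `u`. -/
noncomputable def weightedFourier (a σ s b : ℝ) (u : ℝ → ℝ → ℂ) (z : ℝ × ℝ) : ℝ≥0∞ :=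
  ENNReal.ofReal √(gevreyWeight a σ s b z) * ‖FT2 u z.1 z.2‖ₑ

theorem gevreyWeight_nonneg (a σ s b : ℝ) (z : ℝ × ℝ) : 0 ≤ gevreyWeight a σ s b z := by
  unfold gevreyWeight
  positivity

theorem measurable_weightedFourier (a σ s b : ℝ) (f : SchwartzMap (ℝ × ℝ) ℂ) :
    Measurable (weightedFourier a σ s b fun t x => f (t, x)) := by
  have := (continuous_spaceTimeFourier f).measurable
  change Measurable fun z => ENNReal.ofReal √(gevreyWeight a σ s b z) * ‖spaceTimeFourier f z‖ₑ
  unfold gevreyWeight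
  fun_prop

theorem XNorm_eq_lintegral_weightedFourier (a σ s b : ℝ) (u : ℝ → ℝ → ℂ) :
    XNorm a σ s b u = (∫⁻ τ, ∫⁻ ξ, weightedFourier a σ s b u (τ, ξ) ^ 2) ^ (1 / 2 : ℝ) := by
  unfold XNorm weightedFourier
  congr! 5 with τ ξ
  have hw := gevreyWeight_nonneg a σ s b (τ, ξ)
  rw [mul_pow, ← ofReal_norm, ← ENNReal.ofReal_pow (by positivity),
    ← ENNReal.ofReal_pow (norm_nonneg _), Real.sq_sqrt hw, ← ENNReal.ofReal_mul hw]
  rfl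

theorem XNorm_le_eLpNorm {u : ℝ → ℝ → ℂ} {v : ℝ × ℝ → ℝ≥0∞} (hv : Measurable v)
    (h : ∀ z, weightedFourier a σ s b u z ≤ v z) : XNorm a σ s b u ≤ eLpNorm v 2 volume := by
  rw [XNorm_eq_lintegral_weightedFourier, one_div, ENNReal.rpow_inv_le_iff two_pos,
    ENNReal.rpow_two, eLpNorm_two_sq_eq_lintegral, Measure.volume_eq_prod,
    lintegral_prod _ (by fun_prop)]
  gcongr
  exact h _

theorem eLpNorm_weightedFourier (a σ s b : ℝ) (f : SchwartzMap (ℝ × ℝ) ℂ) :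
    eLpNorm (weightedFourier a σ s b fun t x => f (t, x)) 2 volume =
      XNorm a σ s b fun t x => f (t, x) := by
  have := measurable_weightedFourier a σ s b f
  refine le_antisymm ?_ (XNorm_le_eLpNorm this fun _ => le_rfl)
  rw [XNorm_eq_lintegral_weightedFourier, le_rpow_half_iff, eLpNorm_two_sq_eq_lintegral,
    Measure.volume_eq_prod, lintegral_prod _ (by fun_prop)]

theorem bracket_add_rpow_le {e : ℝ} (he : 0 ≤ e) (x y : ℝ) :
    ⟪x + y⟫ ^ e ≤ ⟪x⟫ ^ e * ⟪y⟫ ^ e := by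
  rw [← Real.mul_rpow (by positivity) (by positivity)]
  gcongr
  nlinarith [abs_add_le x y, mul_nonneg (abs_nonneg x) (abs_nonneg y)]

theorem spatial_weight_mul_sq_le (hσ : 0 ≤ σ) (hsρ : 0 ≤ s + ρ) (x y : ℝ) :
    Real.exp (2 * σ * |x + y|) * ⟪x + y⟫ ^ (2 * s) * (x + y) ^ 2 ≤
      multiplier ρ x y * (Real.exp (2 * σ * |x|) * ⟪x⟫ ^ (2 * s) *
        (Real.exp (2 * σ * |y|) * ⟪y⟫ ^ (2 * s))) := by
  have exp_le : Real.exp (2 * σ * |x + y|) ≤ Real.exp (2 * σ * |x|) * Real.exp (2 * σ * |y|) := by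
    rw [← Real.exp_add, ← mul_add]
    gcongr
    exact abs_add_le x y
  have split (v : ℝ) : ⟪v⟫ ^ (2 * (s + ρ)) = ⟪v⟫ ^ (2 * ρ) * ⟪v⟫ ^ (2 * s) := by
    rw [← Real.rpow_add (by positivity)]
    ring_nf
  have split_neg : ⟪x + y⟫ ^ (2 * s) = ⟪x + y⟫ ^ (-(2 * ρ)) * ⟪x + y⟫ ^ (2 * (s + ρ)) := by
    rw [← Real.rpow_add (by positivity)]
    ring_nf
  calc Real.exp (2 * σ * |x + y|) * ⟪x + y⟫ ^ (2 * s) * (x + y) ^ 2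
      = (x + y) ^ 2 * ⟪x + y⟫ ^ (-(2 * ρ)) *
          (Real.exp (2 * σ * |x + y|) * ⟪x + y⟫ ^ (2 * (s + ρ))) := by
        rw [split_neg]
        ring
    _ ≤ (x + y) ^ 2 * ⟪x + y⟫ ^ (-(2 * ρ)) * (Real.exp (2 * σ * |x|) * Real.exp (2 * σ * |y|) *
          (⟪x⟫ ^ (2 * (s + ρ)) * ⟪y⟫ ^ (2 * (s + ρ)))) := by
        gcongr
        exact bracket_add_rpow_le (by positivity) x y
    _ = _ := by
        rw [split, split, multiplier]
        ring

theorem gevreyWeight_mul_sq_le (hσ : 0 ≤ σ) (hsρ : 0 ≤ s + ρ) (hb' : 2 * b' ≤ -α)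
    (z w : ℝ × ℝ) :
    gevreyWeight a₁ σ s b' z * z.2 ^ 2 ≤ symbol a₁ a₂ ρ α (2 * b) z w *
      (gevreyWeight a₂ σ s b w * gevreyWeight a₂ σ s b (z - w)) := by
  have spatial_le := spatial_weight_mul_sq_le (ρ := ρ) hσ hsρ w.2 (z - w).2
  have modulation_le : ⟪modulation a₁ z⟫ ^ (2 * b') ≤ ⟪modulation a₁ z⟫ ^ (-α) :=
    Real.rpow_le_rpow_of_exponent_le (by simp) hb'
  have cancel (v : ℝ) : ⟪v⟫ ^ (-(2 * b)) * ⟪v⟫ ^ (2 * b) = 1 := by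
    rw [← Real.rpow_add (by positivity), neg_add_cancel, Real.rpow_zero]
  have snd_add : w.2 + (z - w).2 = z.2 := by simp
  rw [snd_add] at spatial_le
  set m := multiplier ρ w.2 (z - w).2
  set Ew := Real.exp (2 * σ * |w.2|) * ⟪w.2⟫ ^ (2 * s)
  set Ed := Real.exp (2 * σ * |(z - w).2|) * ⟪(z - w).2⟫ ^ (2 * s)
  have hm : 0 ≤ m * (Ew * Ed) := mul_nonneg (multiplier_nonneg _ _ _) (by positivity)
  calc gevreyWeight a₁ σ s b' z * z.2 ^ 2
      = Real.exp (2 * σ * |z.2|) * ⟪z.2⟫ ^ (2 * s) * z.2 ^ 2 * ⟪modulation a₁ z⟫ ^ (2 * b') := by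
        rw [gevreyWeight]
        ring
    _ ≤ m * (Ew * Ed) * ⟪modulation a₁ z⟫ ^ (-α) := by gcongr
    _ = m * (Ew * Ed) * ⟪modulation a₁ z⟫ ^ (-α) *
          (⟪modulation a₂ w⟫ ^ (-(2 * b)) * ⟪modulation a₂ w⟫ ^ (2 * b)) *
          (⟪modulation a₂ (z - w)⟫ ^ (-(2 * b)) * ⟪modulation a₂ (z - w)⟫ ^ (2 * b)) := by
        rw [cancel, cancel, mul_one, mul_one]
    _ = _ := by
        rw [symbol, gevreyWeight, gevreyWeight]
        ring

/-- The kernel of the bilinear estimate, between the functions `weightedFourier` of the inputs and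
of the output. -/
noncomputable def symbolKernel (a₁ a₂ ρ α β : ℝ) (z w : ℝ × ℝ) : ℝ≥0∞ :=
  ENNReal.ofReal √(symbol a₁ a₂ ρ α β z w)

theorem measurable_symbolKernel (a₁ a₂ ρ α β : ℝ) :
    Measurable (Function.uncurry (symbolKernel a₁ a₂ ρ α β)) :=
  (measurable_symbol a₁ a₂ ρ α β).sqrt.ennreal_ofReal

theorem weightedFourier_deriv_mul_le (hσ : 0 ≤ σ) (hsρ : 0 ≤ s + ρ) (hb' : 2 * b' ≤ -α)
    (f g : SchwartzMap (ℝ × ℝ) ℂ) (z : ℝ × ℝ) :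
    weightedFourier a₁ σ s b' (fun t x => deriv (fun y => f (t, y) * g (t, y)) x) z ≤
      kernelConv volume (symbolKernel a₁ a₂ ρ α (2 * b))
        (weightedFourier a₂ σ s b fun t x => f (t, x))
        (weightedFourier a₂ σ s b fun t x => g (t, x)) z := by
  have weight_le (w : ℝ × ℝ) :
      ENNReal.ofReal √(gevreyWeight a₁ σ s b' z) * ENNReal.ofReal |z.2| ≤
        symbolKernel a₁ a₂ ρ α (2 * b) z w * (ENNReal.ofReal √(gevreyWeight a₂ σ s b w) *
          ENNReal.ofReal √(gevreyWeight a₂ σ s b (z - w))) := by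
    rw [symbolKernel, ← ENNReal.ofReal_mul (by positivity), ← ENNReal.ofReal_mul (by positivity),
      ← ENNReal.ofReal_mul (by positivity), ← Real.sqrt_sq_eq_abs,
      ← Real.sqrt_mul (gevreyWeight_nonneg _ _ _ _ _),
      ← Real.sqrt_mul (gevreyWeight_nonneg _ _ _ _ _),
      ← Real.sqrt_mul (symbol_nonneg _ _ _ _ _ _ _)]
    exact ENNReal.ofReal_le_ofReal (Real.sqrt_le_sqrt (gevreyWeight_mul_sq_le hσ hsρ hb' z w))
  have hf := (continuous_spaceTimeFourier f).measurable
  have hg := (continuous_spaceTimeFourier g).measurable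
  calc _ ≤ ENNReal.ofReal √(gevreyWeight a₁ σ s b' z) * (ENNReal.ofReal |z.2| *
          ∫⁻ w, ‖spaceTimeFourier f w‖ₑ * ‖spaceTimeFourier g (z - w)‖ₑ) :=
        mul_le_mul_right (enorm_FT2_deriv_mul_le f g z) _
    _ = ∫⁻ w, ENNReal.ofReal √(gevreyWeight a₁ σ s b' z) * ENNReal.ofReal |z.2| *
          (‖spaceTimeFourier f w‖ₑ * ‖spaceTimeFourier g (z - w)‖ₑ) := by
        rw [← mul_assoc, lintegral_const_mul _ (by fun_prop)]
    _ ≤ _ := by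
        refine lintegral_mono fun w => (mul_le_mul_left (weight_le w) _).trans_eq ?_
        simp only [weightedFourier, spaceTimeFourier]
        ring

theorem exists_eLpNorm_kernelConv_symbolKernel_le (ha₁ : a₁ ≠ 0) (ha₂ : a₂ ≠ 0)
    (hratio : a₂ / a₁ < 0 ∨ a₂ / a₁ = 1 ∨ 4 < a₂ / a₁) (hexp : AdmissibleExponents ρ α)
    (hρ : ρ ≤ 1) (hαβ : α ≤ β) (hβ : 1 < β) :
    ∃ T ≠ ⊤, ∀ F H : ℝ × ℝ → ℝ≥0∞, Measurable F → Measurable H →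
      eLpNorm (kernelConv volume (symbolKernel a₁ a₂ ρ α β) F H) 2 volume ≤
        T * (eLpNorm F 2 volume * eLpNorm H 2 volume) := by
  obtain ⟨M, k, l, hM, symbol_le⟩ := exists_symbol_le ha₁ hratio hexp hρ hαβ
  obtain ⟨CA, hCA, hA⟩ := exists_lintegral_outputMajorant_le ha₂ hβ
  obtain ⟨CB, hCB, hB⟩ := exists_lintegral_inputMajorant_le a₁ a₂ k l hβ
  refine ⟨3 * (ENNReal.ofReal M * max CA CB) ^ (1 / 2 : ℝ), by finiteness, fun F H hF hH =>
    eLpNorm_kernelConv_le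
      (A := fun z w => ENNReal.ofReal M * ENNReal.ofReal (outputMajorant a₂ β z w))
      (B := fun w η => ENNReal.ofReal M * ENNReal.ofReal (inputMajorant a₁ a₂ k l β w η))
      ((measurable_outputMajorant a₂ β).ennreal_ofReal.const_mul _)
      ((measurable_inputMajorant a₁ a₂ k l β).ennreal_ofReal.const_mul _) hF hH
      (fun z w => ?_) (fun z => ?_) (fun w => ?_)⟩
  · have hout := outputMajorant_nonneg a₂ β z w
    have hin := inputMajorant_nonneg a₁ a₂ k l β w (z - w)
    have hin' := inputMajorant_nonneg a₁ a₂ k l β (z - w) w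
    rw [symbolKernel, ← ENNReal.ofReal_pow (by positivity),
      Real.sq_sqrt (symbol_nonneg _ _ _ _ _ _ _), ← mul_add, ← mul_add,
      ← ENNReal.ofReal_add hout hin, ← ENNReal.ofReal_add (add_nonneg hout hin) hin',
      ← ENNReal.ofReal_mul hM]
    exact ENNReal.ofReal_le_ofReal (symbol_le z w)
  · rw [lintegral_const_mul' _ _ ENNReal.ofReal_ne_top]
    gcongr
    exact (hA z).trans (le_max_left _ _)
  · rw [lintegral_const_mul' _ _ ENNReal.ofReal_ne_top]
    gcongr
    exact (hB w).trans (le_max_right _ _)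

theorem exists_XNorm_deriv_mul_le (ha₁ : a₁ ≠ 0) (ha₂ : a₂ ≠ 0)
    (hratio : a₂ / a₁ < 0 ∨ a₂ / a₁ = 1 ∨ 4 < a₂ / a₁) (hexp : AdmissibleExponents ρ α)
    (hρ : ρ ≤ 1) (hsρ : 0 ≤ s + ρ) (hα : α ≤ 2 * b) (hb : 1 / 2 < b) :
    ∃ T ≠ ⊤, ∀ σ, 0 ≤ σ → ∀ b', 2 * b' ≤ -α → ∀ f g : SchwartzMap (ℝ × ℝ) ℂ,
      XNorm a₁ σ s b' (fun t x => deriv (fun y => f (t, y) * g (t, y)) x) ≤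
        T * (XNorm a₂ σ s b (fun t x => f (t, x)) * XNorm a₂ σ s b (fun t x => g (t, x))) := by
  obtain ⟨T, hT, kernel_le⟩ := exists_eLpNorm_kernelConv_symbolKernel_le ha₁ ha₂ hratio hexp hρ hα
    (by linarith)
  refine ⟨T, hT, fun σ hσ b' hb' f g => ?_⟩
  have hf := measurable_weightedFourier a₂ σ s b f
  have hg := measurable_weightedFourier a₂ σ s b g
  rw [← eLpNorm_weightedFourier, ← eLpNorm_weightedFourier]
  exact (XNorm_le_eLpNorm (measurable_kernelConv (measurable_symbolKernel _ _ _ _ _) hf hg)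
    (weightedFourier_deriv_mul_le hσ hsρ hb' f g)).trans (kernel_le _ _ hf hg)

theorem exists_admissibleExponents (hs : -(3 / 4) < s) :
    ∃ ρ δ, ρ ≤ 1 ∧ 0 ≤ s + ρ ∧ 0 < δ ∧ δ < 1 / 2 ∧ AdmissibleExponents ρ (1 - 4 * δ) := by
  set ρ := max (-s) (5 / 8)
  have le_ρ : 5 / 8 ≤ ρ := le_max_right _ _
  have neg_le_ρ : -s ≤ ρ := le_max_left _ _
  have ρ_lt : ρ < 3 / 4 := max_lt (by linarith) (by norm_num)
  refine ⟨ρ, (3 / 4 - ρ) / 12, by linarith, by linarith, by linarith, by linarith, ?_, ?_, ?_⟩ <;>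
    linarith

end GevreyBourgain

/-- Bilinear estimate (3.2): for `a₁, a₂ ≠ 0` with `a₂/a₁ < 0`, `a₂/a₁ = 1` or
`a₂/a₁ > 4`, and `s > −3/4`, there exist `b ∈ (1/2,1)`, `ε > 0` and `C > 0`
such that for all `σ ≥ 0`, all `b' ∈ [b, b+ε)` and all Schwartz `f, g`:
`‖∂_x(fg)‖_{X_{a₁}^{σ,s,b'−1}} ≤ C ‖f‖_{X_{a₂}^{σ,s,b}} ‖g‖_{X_{a₂}^{σ,s,b}}`. -/
theorem bilinear_vv (a₁ a₂ s : ℝ) (ha₁ : a₁ ≠ 0) (ha₂ : a₂ ≠ 0)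
    (hratio : a₂ / a₁ < 0 ∨ a₂ / a₁ = 1 ∨ 4 < a₂ / a₁) (hs : -(3/4) < s) :
    ∃ b ∈ Set.Ioo (1/2 : ℝ) 1, ∃ ε : ℝ, 0 < ε ∧ ∃ C : ℝ, 0 < C ∧
      ∀ σ : ℝ, 0 ≤ σ → ∀ b' ∈ Set.Ico b (b + ε),
        ∀ f g : SchwartzMap (ℝ × ℝ) ℂ,
          XNorm a₁ σ s (b' - 1) (fun t x => deriv (fun y => f (t, y) * g (t, y)) x) ≤
            ENNReal.ofReal C *
              (XNorm a₂ σ s b (fun t x => f (t, x)) * XNorm a₂ σ s b (fun t x => g (t, x))) := by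
  obtain ⟨ρ, δ, hρ, hsρ, hδ, hδ', hexp⟩ := exists_admissibleExponents hs
  obtain ⟨T, hT, estimate⟩ := exists_XNorm_deriv_mul_le (b := 1 / 2 + δ) ha₁ ha₂ hratio hexp hρ hsρ
    (by linarith) (by linarith)
  refine ⟨1 / 2 + δ, ⟨by linarith, by linarith⟩, δ, hδ, T.toReal + 1, by positivity,
    fun σ hσ b' hb' f g => (estimate σ hσ (b' - 1) (by linarith [hb'.2]) f g).trans ?_⟩
  gcongr
  rw [← ENNReal.ofReal_toReal hT]
  exact ENNReal.ofReal_le_ofReal (by simp)
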